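/- Let P be a polymatroid of rank r on [m] such that rk_P({i}) = r for some i ∈ [m]. Define integers a_k (for k ∈ ℤ_{≥0}^m with |k| ≤ r) by the expansion Σ_{k ∈ I(P)∩ℤ^m} t^{(k)} = Σ_k (−1)^{r−|k|} a_k t^{[k]} in ℚ[t_1,…,t_m]. Then the homogeneous polynomial H̃(t_1,…,t_m,t_0) = Σ_k a_k t^k t_0^{r−|k|} is denormalized Lorentzian; in particular all a_k are nonnegative. -/

import Mathlib

open MvPolynomial Finset

/-- The rank-function axioms of a polymatroid on a finite ground set. -/
def IsPolymatroid {α : Type*} [Fintype α] [DecidableEq α] (rk : Finset α → ℕ) : Prop :=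
  rk ∅ = 0 ∧ (∀ I J : Finset α, I ⊆ J → rk I ≤ rk J) ∧
    ∀ I J : Finset α, rk (I ∩ J) + rk (I ∪ J) ≤ rk I + rk J

/-- The base polytope `B(P)` of a polymatroid. -/
def basePolytope {α : Type*} [Fintype α] (rk : Finset α → ℕ) : Set (α → ℝ) :=
  {x | (∀ i, 0 ≤ x i) ∧ (∑ i, x i) = (rk Finset.univ : ℝ) ∧
      ∀ I : Finset α, (∑ i ∈ I, x i) ≤ (rk I : ℝ)}

/-- The independence polytope `I(P)` of a polymatroid. -/
def indepPolytope {α : Type*} [Fintype α] (rk : Finset α → ℕ) : Set (α → ℝ) :=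
  {x | (∀ i, 0 ≤ x i) ∧ ∀ I : Finset α, (∑ i ∈ I, x i) ≤ (rk I : ℝ)}

/-- `binomLower p k` is `p^{(k)} = binom(p + k - 1, k) = p(p+1)⋯(p+k-1)/k!`. -/
noncomputable def binomLower {σ K : Type*} [Field K] (p : MvPolynomial σ K) (k : ℕ) :
    MvPolynomial σ K :=
  (k.factorial : K)⁻¹ • ∏ j ∈ Finset.range k, (p + MvPolynomial.C (j : K))

/-- `binomUpper p k` is `p^{[k]} = binom(p + k, k) = (p+1)(p+2)⋯(p+k)/k!`. -/
noncomputable def binomUpper {σ K : Type*} [Field K] (p : MvPolynomial σ K) (k : ℕ) :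
    MvPolynomial σ K :=
  (k.factorial : K)⁻¹ • ∏ j ∈ Finset.range k, (p + MvPolynomial.C ((j : K) + 1))

/-- The Hessian matrix of a polynomial: its `(i,j)` entry is the constant coefficient of
`∂ᵢ ∂ⱼ f` (for a quadratic form this is the usual symmetric Hessian matrix). -/
noncomputable def hessian {n : ℕ} (q : MvPolynomial (Fin n) ℝ) : Matrix (Fin n) (Fin n) ℝ :=
  fun i j => (MvPolynomial.pderiv i (MvPolynomial.pderiv j q)).coeff 0

/-- A real symmetric matrix has at most one positive eigenvalue (with multiplicity). -/
def AtMostOnePosEigenvalue {n : ℕ} (A : Matrix (Fin n) (Fin n) ℝ) : Prop :=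
  ∀ hA : A.IsHermitian, {i : Fin n | 0 < hA.eigenvalues i}.Subsingleton

/-- A homogeneous polynomial of degree `d` with nonnegative coefficients is Lorentzian if its
support is the set of lattice points of the base polytope of a polymatroid, and every sequence
of `d - 2` partial derivatives yields a quadratic form whose (symmetric) Hessian matrix has at
most one positive eigenvalue. -/
def IsLorentzian {n : ℕ} (d : ℕ) (f : MvPolynomial (Fin n) ℝ) : Prop :=
  f.IsHomogeneous d ∧ (∀ e, 0 ≤ f.coeff e) ∧
    (∃ rkQ : Finset (Fin n) → ℕ, IsPolymatroid rkQ ∧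
      ∀ κ : Fin n → ℕ,
        (0 < f.coeff (Finsupp.equivFunOnFinite.symm κ) ↔
          (fun i => (κ i : ℝ)) ∈ basePolytope rkQ)) ∧
    ∀ v : Fin (d - 2) → Fin n,
      AtMostOnePosEigenvalue
        (hessian ((List.ofFn v).foldl (fun g i => MvPolynomial.pderiv i g) f))

/-- The normalization `N(f)`, replacing each monomial `c • t^κ` by `(c/κ!) • t^κ`. -/
noncomputable def normalizePoly {n : ℕ} (f : MvPolynomial (Fin n) ℝ) :
    MvPolynomial (Fin n) ℝ :=
  ∑ e ∈ f.support, MvPolynomial.monomial e (f.coeff e / ∏ i, ((e i).factorial : ℝ))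

/-- A polynomial is denormalized Lorentzian if its normalization is Lorentzian. -/
def IsDenormalizedLorentzian {n : ℕ} (d : ℕ) (f : MvPolynomial (Fin n) ℝ) : Prop :=
  IsLorentzian d (normalizePoly f)

/-!
Let `e` be an index with `rk {e} = r` and `B` the set of lattice points of `B(P)`. Then `a κ` is the
number of subsets `S` of `[m] ∖ {e}` with `κ + 1_S ∈ B`. To see this, evaluate the defining identity
at `t = -1 - p` with `p ∈ ℕ ^ m`, where `t^{[k]}` is `±binom(p, k)` and `t^{(k)}` is
`±binom(p + 1, k)`. The points of `I(P)` arise from those of `B` by lowering the coordinate `e`, so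
an alternating sum over that coordinate leaves a sum over `B`. Expand it by Pascal's rule in the
other coordinates and compare coefficients.

The pairs `(κ, 1_S)` with `κ + 1_S ∈ B` form an M-convex set in `ℕ ^ (m + m)`, and merging the last
`m` coordinates into one gives the exponents of `H̃`. The exponential generating function of an
M-convex set is Lorentzian, by induction on the degree. Substituting a single variable `y` for the
last `m` variables and dividing the coefficient of `y ^ s` by a further `s!` changes the Hessian by
a positive multiple of a square, which is subtracted.
-/

/-! ### Lorentzian quadratic forms -/

section LorentzianForm

open Matrix

variable {ι κ : Type*} [Fintype ι] [Fintype κ]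

/-- The quadratic form of `A` is nonpositive on a hyperplane (or everywhere, if `l = 0`). For
symmetric `A` this says that `A` has at most one positive eigenvalue, but it needs neither an
ordering of the indices nor a diagonalization. -/
def IsLorentzianForm (A : Matrix ι ι ℝ) : Prop :=
  ∃ l : ι → ℝ, ∀ z, l ⬝ᵥ z = 0 → z ⬝ᵥ A *ᵥ z ≤ 0

theorem IsLorentzianForm.of_le {A : Matrix ι ι ℝ} {B : Matrix κ κ ℝ} (hB : IsLorentzianForm B)
    (P : Matrix κ ι ℝ) {c : ℝ} (hc : 0 ≤ c)
    (h : ∀ z, z ⬝ᵥ A *ᵥ z ≤ c * ((P *ᵥ z) ⬝ᵥ B *ᵥ (P *ᵥ z))) : IsLorentzianForm A := by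
  obtain ⟨l, hl⟩ := hB
  refine ⟨l ᵥ* P, fun z hz => (h z).trans (mul_nonpos_of_nonneg_of_nonpos hc (hl _ ?_))⟩
  rwa [dotProduct_mulVec]

theorem IsLorentzianForm.rescale {A : Matrix ι ι ℝ} (hA : IsLorentzianForm A) {c : ℝ} (hc : 0 ≤ c)
    (u : ι → ℝ) : IsLorentzianForm (.of fun i j => c * (u i * u j * A i j)) := by
  classical
  refine hA.of_le (diagonal u) hc fun z => le_of_eq ?_
  have hdiag : diagonal u *ᵥ z = u * z := funext fun i => mulVec_diagonal u z i
  rw [hdiag]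
  simp only [dotProduct, mulVec, of_apply, Pi.mul_apply, Finset.mul_sum]
  exact Finset.sum_congr rfl fun i _ => Finset.sum_congr rfl fun j _ => by ring

theorem dotProduct_mulVec_comm_of_isSymm {A : Matrix ι ι ℝ} (hA : A.IsSymm) (x y : ι → ℝ) :
    x ⬝ᵥ A *ᵥ y = y ⬝ᵥ A *ᵥ x := by
  rw [dotProduct_mulVec, ← mulVec_transpose, hA.eq, dotProduct_comm]

theorem dotProduct_mulVec_smul_add_smul {A : Matrix ι ι ℝ} (hA : A.IsSymm) (c d : ℝ)
    (x y : ι → ℝ) :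
    (c • x + d • y) ⬝ᵥ A *ᵥ (c • x + d • y)
      = c ^ 2 * (x ⬝ᵥ A *ᵥ x) + 2 * (c * d) * (x ⬝ᵥ A *ᵥ y) + d ^ 2 * (y ⬝ᵥ A *ᵥ y) := by
  simp only [mulVec_add, mulVec_smul, add_dotProduct, dotProduct_add, smul_dotProduct,
    dotProduct_smul, smul_eq_mul, dotProduct_mulVec_comm_of_isSymm hA y x]
  ring

theorem IsLorentzianForm.mul_le_sq {A : Matrix ι ι ℝ} (h : IsLorentzianForm A) (hA : A.IsSymm)
    (x : ι → ℝ) {y : ι → ℝ} (hy : 0 < y ⬝ᵥ A *ᵥ y) :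
    (x ⬝ᵥ A *ᵥ x) * (y ⬝ᵥ A *ᵥ y) ≤ (x ⬝ᵥ A *ᵥ y) ^ 2 := by
  obtain ⟨l, hl⟩ := h
  have hly : l ⬝ᵥ y ≠ 0 := fun h0 => (hl y h0).not_gt hy
  have hcomb := hl ((l ⬝ᵥ y) • x + (-(l ⬝ᵥ x)) • y) (by
    simp only [dotProduct_add, dotProduct_smul, smul_eq_mul]; ring)
  rw [dotProduct_mulVec_smul_add_smul hA] at hcomb
  refine le_of_mul_le_mul_left ?_ (sq_pos_of_ne_zero hly)
  nlinarith [mul_le_mul_of_nonneg_right hcomb hy.le,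
    sq_nonneg ((l ⬝ᵥ y) * (x ⬝ᵥ A *ᵥ y) - (l ⬝ᵥ x) * (y ⬝ᵥ A *ᵥ y))]

theorem IsLorentzianForm.of_mul_le_sq {A : Matrix ι ι ℝ}
    (h : ∀ x y, 0 < y ⬝ᵥ A *ᵥ y → (x ⬝ᵥ A *ᵥ x) * (y ⬝ᵥ A *ᵥ y) ≤ (x ⬝ᵥ A *ᵥ y) ^ 2) :
    IsLorentzianForm A := by
  by_cases hpos : ∃ y, 0 < y ⬝ᵥ A *ᵥ y
  · obtain ⟨y, hy⟩ := hpos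
    refine ⟨A *ᵥ y, fun z hz => ?_⟩
    have hzy := h z y hy
    rw [dotProduct_comm z (A *ᵥ y), hz] at hzy
    nlinarith
  · push Not at hpos
    exact ⟨0, fun z _ => hpos z⟩

theorem IsLorentzianForm.atMostOnePosEigenvalue {n : ℕ} {A : Matrix (Fin n) (Fin n) ℝ}
    (h : IsLorentzianForm A) : AtMostOnePosEigenvalue A := by
  intro hA i hi j hj
  by_contra hij
  set v := hA.eigenvectorBasis
  have hAv : ∀ k l, v k ⬝ᵥ A *ᵥ v l = hA.eigenvalues l * if k = l then 1 else 0 := by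
    intro k l
    rw [hA.mulVec_eigenvectorBasis l, dotProduct_smul, smul_eq_mul,
      ← orthonormal_iff_ite.mp v.orthonormal k l]
    simp [v, PiLp.inner_apply, dotProduct, mul_comm]
  obtain ⟨l, hl⟩ := h
  have hplane : ∀ c d : ℝ, c * (l ⬝ᵥ v i) + d * (l ⬝ᵥ v j) = 0 →
      c ^ 2 * hA.eigenvalues i + d ^ 2 * hA.eigenvalues j ≤ 0 := by
    intro c d hcd
    have hle := hl (c • ⇑(v i) + d • ⇑(v j)) (by
      simpa only [dotProduct_add, dotProduct_smul, smul_eq_mul] using hcd)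
    simpa [dotProduct_mulVec_smul_add_smul (isHermitian_iff_isSymm.mp hA), hAv, hij] using hle
  have hi' : 0 < hA.eigenvalues i := hi
  have hj' : 0 < hA.eigenvalues j := hj
  by_cases h0 : l ⬝ᵥ v i = 0
  · have := hplane 1 0 (by simp [h0])
    linarith
  · have := hplane (l ⬝ᵥ v j) (-(l ⬝ᵥ v i)) (by ring)
    nlinarith [mul_pos hj' (sq_pos_of_ne_zero h0), mul_nonneg hi'.le (sq_nonneg (l ⬝ᵥ v j))]

theorem dotProduct_mulVec_eq_sum_eigenvalues [DecidableEq ι] {A : Matrix ι ι ℝ}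
    (hA : A.IsHermitian) (z : ι → ℝ) :
    z ⬝ᵥ A *ᵥ z = ∑ k, hA.eigenvalues k * (hA.eigenvectorBasis k ⬝ᵥ z) ^ 2 := by
  have hinner : ∀ x y : EuclideanSpace ℝ ι, inner ℝ x y = x ⬝ᵥ y := fun x y => by
    simp [PiLp.inner_apply, dotProduct, mul_comm]
  have hparseval :=
    hA.eigenvectorBasis.sum_inner_mul_inner (WithLp.toLp 2 z) (WithLp.toLp 2 (A *ᵥ z))
  simp only [hinner] at hparseval
  rw [← hparseval]
  refine Finset.sum_congr rfl fun k _ => ?_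
  rw [dotProduct_mulVec_comm_of_isSymm (isHermitian_iff_isSymm.mp hA),
    hA.mulVec_eigenvectorBasis, dotProduct_smul, dotProduct_comm z, smul_eq_mul]
  ring

theorem dotProduct_mulVec_nonpos_of_eigenvectors {A : Matrix ι ι ℝ} (hA : A.IsSymm) {z : ι → ℝ}
    (hz : ∀ (x : ι → ℝ) (μ : ℝ), 0 < μ → A *ᵥ x = μ • x → x ⬝ᵥ z = 0) : z ⬝ᵥ A *ᵥ z ≤ 0 := by
  classical
  have hA' := isHermitian_iff_isSymm.mpr hA
  rw [dotProduct_mulVec_eq_sum_eigenvalues hA']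
  refine Finset.sum_nonpos fun k _ => ?_
  rcases le_or_gt (hA'.eigenvalues k) 0 with hμ | hμ
  · exact mul_nonpos_of_nonpos_of_nonneg hμ (sq_nonneg _)
  · rw [hz _ _ hμ (hA'.mulVec_eigenvectorBasis k), zero_pow two_ne_zero, mul_zero]

omit [Fintype ι] in
theorem exists_isSymm_eq_mul_mul {A : Matrix ι ι ℝ} (hA : A.IsSymm) {s : ι → ℝ}
    (hs : ∀ i j, s i = 0 → A i j = 0) :
    ∃ B : Matrix ι ι ℝ, B.IsSymm ∧ (∀ i j, A i j = s i * B i j * s j) ∧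
      ∀ i j, s j = 0 → B i j = 0 := by
  refine ⟨.of fun i j => (s i)⁻¹ * A i j * (s j)⁻¹, IsSymm.ext fun i j => ?_, fun i j => ?_,
    fun i j hj => by simp [hj]⟩
  · simp only [of_apply, hA.apply]
    ring
  · by_cases hi : s i = 0
    · rw [hi, hs i j hi]; ring
    by_cases hj : s j = 0
    · rw [hj, ← hA.apply, hs j i hj]; ring
    simp only [of_apply]
    field_simp

-- Diagonalize `D^(-1/2) A D^(-1/2)`: its eigenvectors are the `D^(1/2) x` with `A x = μ D x`.
theorem dotProduct_mulVec_nonpos_of_generalized_eigenvectors {A : Matrix ι ι ℝ} (hA : A.IsSymm)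
    {d : ι → ℝ} (hd : ∀ i, 0 ≤ d i) (hdA : ∀ i j, d i = 0 → A i j = 0) {z : ι → ℝ}
    (hz : ∀ (x : ι → ℝ) (μ : ℝ), 0 < μ → A *ᵥ x = μ • (d * x) → (d * x) ⬝ᵥ z = 0) :
    z ⬝ᵥ A *ᵥ z ≤ 0 := by
  set s : ι → ℝ := fun i => √(d i)
  have hss : ∀ i, s i * s i = d i := fun i => Real.mul_self_sqrt (hd i)
  obtain ⟨B, hB, hAB, hB0⟩ := exists_isSymm_eq_mul_mul hA (s := s) fun i j hi =>
    hdA i j (by rw [← hss, hi, zero_mul])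
  have hzB : z ⬝ᵥ A *ᵥ z = (s * z) ⬝ᵥ B *ᵥ (s * z) := by
    simp only [dotProduct, mulVec, Pi.mul_apply, Finset.mul_sum, hAB]
    exact Finset.sum_congr rfl fun i _ => Finset.sum_congr rfl fun j _ => by ring
  rw [hzB]
  refine dotProduct_mulVec_nonpos_of_eigenvectors hB fun v μ hμ hv => ?_
  have hdx : d * (s⁻¹ * v) = s * v := by
    ext i
    by_cases hi : s i = 0
    · simp [← hss, hi]
    · simp only [Pi.mul_apply, Pi.inv_apply, ← hss]; field_simp
  have hAx : A *ᵥ (s⁻¹ * v) = μ • (d * (s⁻¹ * v)) := by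
    have hBv : s * (B *ᵥ v) = μ • (s * v) := by rw [hv, mul_smul_comm]
    rw [hdx, ← hBv]
    ext i
    simp only [mulVec, dotProduct, Pi.mul_apply, Pi.inv_apply, Finset.mul_sum]
    refine Finset.sum_congr rfl fun j _ => ?_
    by_cases hj : s j = 0
    · simp [hj, hB0]
    · rw [hAB]; field_simp
  rw [← hz _ _ hμ hAx, hdx]
  simp only [dotProduct, Pi.mul_apply]
  exact Finset.sum_congr rfl fun i _ => by ring

theorem dotProduct_mulVec_of_mulVec_eq_smul_mul {A : Matrix ι ι ℝ} {d x : ι → ℝ} {μ : ℝ}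
    (hx : A *ᵥ x = μ • (d * x)) : x ⬝ᵥ A *ᵥ x = μ * ∑ i, d i * x i ^ 2 := by
  rw [hx, dotProduct_smul, smul_eq_mul]
  congr 1
  exact Finset.sum_congr rfl fun i _ => by simp only [Pi.mul_apply]; ring

theorem sum_rowSum_mul_sq_sub_dotProduct_mulVec {A : Matrix ι ι ℝ} (hA : A.IsSymm) (x : ι → ℝ) :
    ∑ i, (A *ᵥ 1) i * x i ^ 2 - x ⬝ᵥ A *ᵥ x = 1 / 2 * ∑ i, ∑ j, A i j * (x i - x j) ^ 2 := by
  have hrow : ∑ i, (A *ᵥ 1) i * x i ^ 2 = ∑ i, ∑ j, A i j * x i ^ 2 := by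
    simp [mulVec, dotProduct, Finset.sum_mul]
  have hcol : ∑ i, (A *ᵥ 1) i * x i ^ 2 = ∑ i, ∑ j, A i j * x j ^ 2 := by
    rw [hrow, Finset.sum_comm]
    simp only [hA.apply]
  have hquad : x ⬝ᵥ A *ᵥ x = ∑ i, ∑ j, A i j * (x i * x j) := by
    simp only [mulVec, dotProduct, Finset.mul_sum]
    exact Finset.sum_congr rfl fun i _ => Finset.sum_congr rfl fun j _ => by ring
  have hexpand : ∑ i, ∑ j, A i j * (x i - x j) ^ 2
      = ∑ i, ∑ j, A i j * x i ^ 2 + ∑ i, ∑ j, A i j * x j ^ 2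
        - 2 * ∑ i, ∑ j, A i j * (x i * x j) := by
    simp only [Finset.mul_sum, ← Finset.sum_add_distrib, ← Finset.sum_sub_distrib]
    exact Finset.sum_congr rfl fun i _ => Finset.sum_congr rfl fun j _ => by ring
  rw [hexpand, ← hrow, ← hcol, ← hquad]
  ring

theorem IsLorentzianForm.dotProduct_mulVec_le_sq_div {S : Matrix ι ι ℝ} (hS : IsLorentzianForm S)
    (hSs : S.IsSymm) (hS0 : ∀ i j, 0 ≤ S i j) (x : ι → ℝ) :
    x ⬝ᵥ S *ᵥ x ≤ (x ⬝ᵥ S *ᵥ 1) ^ 2 / (1 ⬝ᵥ S *ᵥ 1) := by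
  have htotal : (1 : ι → ℝ) ⬝ᵥ S *ᵥ 1 = ∑ i, ∑ j, S i j := by simp [dotProduct, mulVec]
  rcases (htotal ▸ Finset.sum_nonneg fun i _ => Finset.sum_nonneg fun j _ => hS0 i j :
    0 ≤ (1 : ι → ℝ) ⬝ᵥ S *ᵥ 1).eq_or_lt with h0 | hpos
  · have hzero : S = 0 := by
      ext i j
      rw [htotal, eq_comm, Fintype.sum_eq_zero_iff_of_nonneg
        fun i => Finset.sum_nonneg fun j _ => hS0 i j] at h0
      exact congrFun ((Fintype.sum_eq_zero_iff_of_nonneg (hS0 i)).mp (congrFun h0 i)) j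
    simp [hzero]
  · exact (le_div_iff₀ hpos).mpr (hS.mul_le_sq hSs x hpos)

section Slices

variable {A : Matrix ι ι ℝ} {S : ι → Matrix ι ι ℝ}

theorem one_le_of_mulVec_eq_smul_rowSum (hSs : ∀ l, (S l).IsSymm) (hS0 : ∀ l i j, 0 ≤ S l i j)
    (hS : ∀ l, IsLorentzianForm (S l)) (hsum : A = ∑ l, S l) (hrow : ∀ l, A l = S l *ᵥ 1)
    {x : ι → ℝ} {μ : ℝ} (hμ : 0 < μ) (hx : A *ᵥ x = μ • ((A *ᵥ 1) * x))
    (hX : 0 < ∑ i, (A *ᵥ 1) i * x i ^ 2) : 1 ≤ μ := by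
  have hRl : ∀ l, (1 : ι → ℝ) ⬝ᵥ S l *ᵥ 1 = (A *ᵥ 1) l := fun l => by
    rw [← hrow, dotProduct_comm]; rfl
  have hxl : ∀ l, x ⬝ᵥ S l *ᵥ 1 = (A *ᵥ x) l := fun l => by
    rw [← hrow, dotProduct_comm]; rfl
  have hle : x ⬝ᵥ A *ᵥ x ≤ μ ^ 2 * ∑ i, (A *ᵥ 1) i * x i ^ 2 := calc
    x ⬝ᵥ A *ᵥ x = ∑ l, x ⬝ᵥ S l *ᵥ x := by rw [hsum, sum_mulVec, dotProduct_sum]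
    _ ≤ ∑ l, (A *ᵥ x) l ^ 2 / (A *ᵥ 1) l := Finset.sum_le_sum fun l _ => by
      rw [← hxl, ← hRl]; exact (hS l).dotProduct_mulVec_le_sq_div (hSs l) (hS0 l) x
    _ = μ ^ 2 * ∑ i, (A *ᵥ 1) i * x i ^ 2 := by
      rw [Finset.mul_sum]
      refine Finset.sum_congr rfl fun l _ => ?_
      simp only [hx, Pi.smul_apply, Pi.mul_apply, smul_eq_mul]
      by_cases hl : (A *ᵥ 1) l = 0
      · simp [hl]
      · field_simp
  rw [dotProduct_mulVec_of_mulVec_eq_smul_mul hx, sq, mul_assoc] at hle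
  exact (le_mul_iff_one_le_left hX).mp (le_of_mul_le_mul_left hle hμ)

-- The slices force `μ ≥ 1`, so the Dirichlet form of `A` at `x` is nonpositive.
theorem eq_of_pos_of_mulVec_eq_smul_rowSum (hSs : ∀ l, (S l).IsSymm)
    (hS0 : ∀ l i j, 0 ≤ S l i j) (hS : ∀ l, IsLorentzianForm (S l)) (hsum : A = ∑ l, S l)
    (hrow : ∀ l, A l = S l *ᵥ 1) {x : ι → ℝ} {μ : ℝ} (hμ : 0 < μ)
    (hx : A *ᵥ x = μ • ((A *ᵥ 1) * x)) {i j : ι} (hij : 0 < A i j) : x i = x j := by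
  have hA0 : ∀ i j, 0 ≤ A i j := fun i j => by
    rw [hsum, Matrix.sum_apply]; exact Finset.sum_nonneg fun l _ => hS0 l i j
  have hAs : A.IsSymm := hsum ▸ IsSymm.ext fun i j => by
    simp only [Matrix.sum_apply, (hSs _).apply]
  have hedge : ∀ i j, 0 ≤ A i j * (x i - x j) ^ 2 :=
    fun i j => mul_nonneg (hA0 i j) (sq_nonneg _)
  have hdirichlet : ∑ i, ∑ j, A i j * (x i - x j) ^ 2 ≤ 0 := by
    have hidentity := sum_rowSum_mul_sq_sub_dotProduct_mulVec hAs x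
    rw [dotProduct_mulVec_of_mulVec_eq_smul_mul hx] at hidentity
    have hX : 0 ≤ ∑ i, (A *ᵥ 1) i * x i ^ 2 := Finset.sum_nonneg fun i _ =>
      mul_nonneg (Finset.sum_nonneg fun j _ => mul_nonneg (hA0 i j) zero_le_one) (sq_nonneg _)
    rcases hX.eq_or_lt with hX | hX
    · rw [← hX] at hidentity
      linarith
    · nlinarith [one_le_of_mulVec_eq_smul_rowSum hSs hS0 hS hsum hrow hμ hx hX]
  have hle : A i j * (x i - x j) ^ 2 ≤ 0 :=
    (Finset.single_le_sum (fun j _ => hedge i j) (Finset.mem_univ j)).trans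
      ((Finset.single_le_sum (f := fun i => ∑ j, A i j * (x i - x j) ^ 2)
        (fun i _ => Finset.sum_nonneg fun j _ => hedge i j) (Finset.mem_univ i)).trans hdirichlet)
  have hsq := (mul_eq_zero.mp (hle.antisymm (hedge i j))).resolve_left hij.ne'
  exact sub_eq_zero.mp (pow_eq_zero_iff two_ne_zero |>.mp hsq)

theorem IsLorentzianForm.of_slices (hSs : ∀ l, (S l).IsSymm) (hS0 : ∀ l i j, 0 ≤ S l i j)
    (hS : ∀ l, IsLorentzianForm (S l)) (hsum : A = ∑ l, S l) (hrow : ∀ l, A l = S l *ᵥ 1)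
    (hconn : ∀ i j, (∃ a, 0 < A i a) → (∃ b, 0 < A j b) →
      i = j ∨ 0 < A i j ∨ ∃ l, 0 < A i l ∧ 0 < A l j) : IsLorentzianForm A := by
  have hA0 : ∀ i j, 0 ≤ A i j := fun i j => by
    rw [hsum, Matrix.sum_apply]; exact Finset.sum_nonneg fun l _ => hS0 l i j
  have hAs : A.IsSymm := hsum ▸ IsSymm.ext fun i j => by
    simp only [Matrix.sum_apply, (hSs _).apply]
  have hR : ∀ i, (A *ᵥ 1) i = ∑ j, A i j := fun i => by simp [mulVec, dotProduct]
  have hactive : ∀ i, (A *ᵥ 1) i ≠ 0 → ∃ a, 0 < A i a := fun i hi => by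
    by_contra! hc
    exact hi (hR i ▸ Finset.sum_eq_zero fun j _ => (hc j).antisymm (hA0 i j))
  refine ⟨A *ᵥ 1, fun z hz => dotProduct_mulVec_nonpos_of_generalized_eigenvectors hAs
    (fun i => hR i ▸ Finset.sum_nonneg fun j _ => hA0 i j)
    (fun i j hi => congrFun ((Fintype.sum_eq_zero_iff_of_nonneg (hA0 i)).mp (hR i ▸ hi)) j)
    fun x μ hμ hx => ?_⟩
  have hadj : ∀ i j, 0 < A i j → x i = x j := fun i j =>
    eq_of_pos_of_mulVec_eq_smul_rowSum hSs hS0 hS hsum hrow hμ hx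
  obtain ⟨c, hc⟩ : ∃ c, ∀ i, (A *ᵥ 1) i ≠ 0 → x i = c := by
    by_cases hne : ∃ a, (A *ᵥ 1) a ≠ 0
    · obtain ⟨a, ha⟩ := hne
      refine ⟨x a, fun i hi => ?_⟩
      rcases hconn i a (hactive i hi) (hactive a ha) with rfl | h | ⟨l, hil, hla⟩
      · rfl
      · exact hadj i a h
      · exact (hadj i l hil).trans (hadj l a hla)
    · push Not at hne
      exact ⟨0, fun i hi => absurd (hne i) hi⟩
  have hRx : (A *ᵥ 1) * x = c • (A *ᵥ 1) := by
    ext i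
    by_cases hi : (A *ᵥ 1) i = 0
    · simp [hi]
    · simp [hc i hi, mul_comm]
  rw [hRx, smul_dotProduct, hz, smul_zero]

theorem IsLorentzianForm.of_weighted_slices {w : ι → ℝ} (hw : ∀ i, 0 < w i)
    (hSs : ∀ l, (S l).IsSymm) (hS0 : ∀ l i j, 0 ≤ S l i j) (hS : ∀ l, IsLorentzianForm (S l))
    (hsum : A = ∑ l, w l • S l) (hrow : ∀ l, A l = S l *ᵥ w)
    (hconn : ∀ i j, (∃ a, 0 < A i a) → (∃ b, 0 < A j b) →
      i = j ∨ 0 < A i j ∨ ∃ l, 0 < A i l ∧ 0 < A l j) : IsLorentzianForm A := by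
  have hw2 : ∀ i j, 0 < w i * w j := fun i j => mul_pos (hw i) (hw j)
  set A' : Matrix ι ι ℝ := .of fun i j => w i * w j * A i j with hA'
  set S' : ι → Matrix ι ι ℝ := fun l => .of fun i j => w l * (w i * w j * S l i j) with hS'
  have hA'pos : ∀ i j, 0 < A' i j ↔ 0 < A i j := fun i j => mul_pos_iff_of_pos_left (hw2 i j)
  have hlor : IsLorentzianForm A' := by
    refine .of_slices (S := S') (fun l => IsSymm.ext fun i j => ?_)
      (fun l i j => mul_nonneg (hw l).le (mul_nonneg (hw2 i j).le (hS0 l i j)))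
      (fun l => (hS l).rescale (hw l).le w) ?_ (fun l => ?_)
      (by simpa only [hA'pos] using hconn)
    · simp only [hS', of_apply, (hSs l).apply i j, mul_comm (w j)]
    · ext i j
      simp only [hA', hS', of_apply, hsum, Matrix.sum_apply, Matrix.smul_apply, smul_eq_mul,
        Finset.mul_sum]
      exact Finset.sum_congr rfl fun l _ => by ring
    · ext i
      simp only [hA', hS', of_apply, hrow, mulVec, dotProduct, Finset.mul_sum, Pi.one_apply]
      exact Finset.sum_congr rfl fun j _ => by ring
  convert hlor.rescale zero_le_one w⁻¹ using 1
  ext i j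
  have := (hw i).ne'
  have := (hw j).ne'
  simp only [hA', of_apply, Pi.inv_apply]
  field_simp

end Slices

end LorentzianForm

/-! ### Generating functions of M-convex sets -/

local notation "𝐞[" i "]" => (Pi.single i 1 : _ → ℕ)

section MConvex

open Matrix

variable {ι : Type*} [DecidableEq ι]

/-- M-convexity (Murota) of a set of lattice points: the basis exchange property, where
`u' + 𝐞[j] = u + 𝐞[i]` says `u' = u - 𝐞[j] + 𝐞[i]` without truncated subtraction. -/
def IsMConvex (B : Set (ι → ℕ)) : Prop :=
  ∀ u ∈ B, ∀ v ∈ B, ∀ i, u i < v i → ∃ j, v j < u j ∧ ∃ u' ∈ B, u' + 𝐞[j] = u + 𝐞[i]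

variable {B : Set (ι → ℕ)}

theorem IsMConvex.notMem_add_single_trans (hB : IsMConvex B) {v : ι → ℕ} {i j k : ι}
    (hj : ∃ b, v + 𝐞[j] + 𝐞[b] ∈ B) (hij : v + 𝐞[i] + 𝐞[j] ∉ B) (hjk : v + 𝐞[j] + 𝐞[k] ∉ B) :
    v + 𝐞[i] + 𝐞[k] ∉ B := by
  intro hik
  obtain ⟨b, hb⟩ := hj
  have hji : j ≠ i := by rintro rfl; exact hjk hik
  have hjk' : j ≠ k := by rintro rfl; exact hij hik
  obtain ⟨t, ht, u, hu, hut⟩ := hB _ hik _ hb j (by simp [hji, hjk']; omega)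
  obtain rfl | rfl : t = i ∨ t = k := by
    by_contra! h
    simp only [Pi.add_apply, Pi.single_eq_of_ne h.1, Pi.single_eq_of_ne h.2] at ht
    omega
  · exact hjk (add_right_cancel (hut.trans (by abel) : u + 𝐞[t] = v + 𝐞[j] + 𝐞[k] + 𝐞[t]) ▸ hu)
  · exact hij (add_right_cancel (hut.trans (by abel) : u + 𝐞[t] = v + 𝐞[i] + 𝐞[j] + 𝐞[t]) ▸ hu)

theorem IsMConvex.exists_path (hB : IsMConvex B) {v u u' : ι → ℕ} {i j a b : ι} (hu : u ∈ B)
    (hvu : v + 𝐞[i] + 𝐞[a] ≤ u) (hu' : u' ∈ B) (hvu' : v + 𝐞[j] + 𝐞[b] ≤ u') :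
    i = j ∨ (∃ x ∈ B, v + 𝐞[i] + 𝐞[j] ≤ x) ∨
      ∃ l, (∃ x ∈ B, v + 𝐞[i] + 𝐞[l] ≤ x) ∧ ∃ x ∈ B, v + 𝐞[l] + 𝐞[j] ≤ x := by
  by_cases hij : i = j
  · exact .inl hij
  simp only [Pi.le_def, Pi.add_apply, Pi.single_apply] at *
  right
  by_cases huj : v j < u j
  · exact .inl ⟨u, hu, by grind⟩
  obtain ⟨t, ht, x, hx, hxt⟩ := hB u hu u' hu' j (by grind)
  simp only [funext_iff, Pi.add_apply, Pi.single_apply] at hxt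
  by_cases hti : t = i
  · exact .inr ⟨a, ⟨u, hu, hvu⟩, x, hx, by grind⟩
  · exact .inl ⟨x, hx, by grind⟩

variable [Fintype ι]

open Classical in
/-- The sum of `w l₁ ⋯ w lₙ` over all words `l₁ … lₙ` such that `v + 𝐞[l₁] + ⋯ + 𝐞[lₙ] ∈ B`.
When all elements of `B` have coordinate sum `n + ∑ i, v i`, this is `n!` times the value at `w` of
the `v`-th partial derivative of the generating function `∑ u ∈ B, x ^ u / u!`. -/
noncomputable def wordSum (w : ι → ℝ) (B : Set (ι → ℕ)) : ℕ → (ι → ℕ) → ℝ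
  | 0, v => if v ∈ B then 1 else 0
  | n + 1, v => ∑ l, w l * wordSum w B n (v + 𝐞[l])

theorem sum_add_single (v : ι → ℕ) (i : ι) : ∑ t, (v + 𝐞[i]) t = ∑ t, v t + 1 := by
  simp [Finset.sum_add_distrib]

theorem wordSum_nonneg {w : ι → ℝ} (hw : ∀ i, 0 ≤ w i) (B : Set (ι → ℕ)) (n : ℕ) (v : ι → ℕ) :
    0 ≤ wordSum w B n v := by
  induction n generalizing v with
  | zero => unfold wordSum; split_ifs <;> norm_num
  | succ n ih => exact Finset.sum_nonneg fun l _ => mul_nonneg (hw l) (ih _)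

theorem wordSum_pos {w : ι → ℝ} (hw : ∀ i, 0 < w i) {B : Set (ι → ℕ)} {u : ι → ℕ} (hu : u ∈ B)
    {n : ℕ} {v : ι → ℕ} (hvu : v ≤ u) (hn : ∑ i, u i = ∑ i, v i + n) : 0 < wordSum w B n v := by
  induction n generalizing v with
  | zero =>
    have huv : v = u := funext fun i =>
      (Finset.sum_eq_sum_iff_of_le fun i _ => hvu i).mp hn.symm i (Finset.mem_univ i)
    simp [wordSum, huv, hu]
  | succ n ih =>
    obtain ⟨l, -, hl⟩ : ∃ l ∈ Finset.univ, v l < u l := Finset.exists_lt_of_sum_lt (by omega)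
    refine Finset.sum_pos'
      (fun l _ => mul_nonneg (hw l).le (wordSum_nonneg (fun i => (hw i).le) ..))
      ⟨l, Finset.mem_univ l, mul_pos (hw l) (ih (fun t => ?_) ?_)⟩
    · have := hvu t
      simp only [Pi.add_apply, Pi.single_apply]
      split_ifs with h
      · subst h; omega
      · omega
    · rw [sum_add_single]; omega

theorem exists_le_of_wordSum_ne_zero {w : ι → ℝ} {B : Set (ι → ℕ)} {n : ℕ} {v : ι → ℕ}
    (h : wordSum w B n v ≠ 0) : ∃ u ∈ B, v ≤ u := by
  induction n generalizing v with
  | zero => exact ⟨v, by simpa [wordSum] using h, le_rfl⟩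
  | succ n ih =>
    obtain ⟨l, -, hl⟩ := Finset.exists_ne_zero_of_sum_ne_zero h
    obtain ⟨u, hu, hle⟩ := ih (right_ne_zero_of_mul hl)
    exact ⟨u, hu, le_self_add.trans hle⟩

theorem continuous_wordSum (B : Set (ι → ℕ)) (n : ℕ) (v : ι → ℕ) :
    Continuous fun w => wordSum w B n v := by
  induction n generalizing v with
  | zero => exact continuous_const
  | succ n ih => exact continuous_finsetSum _ fun l _ => (continuous_apply l).mul (ih _)

/-- The Hessian at `w` of the `v`-th partial derivative of the generating function
`∑ u ∈ B, x ^ u / u!`, scaled by `n!`. -/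
noncomputable def wordHessian (w : ι → ℝ) (B : Set (ι → ℕ)) (n : ℕ) (v : ι → ℕ) : Matrix ι ι ℝ :=
  .of fun i j => wordSum w B n (v + 𝐞[i] + 𝐞[j])

theorem wordHessian_isSymm (w : ι → ℝ) (B : Set (ι → ℕ)) (n : ℕ) (v : ι → ℕ) :
    (wordHessian w B n v).IsSymm :=
  IsSymm.ext fun i j => by simp only [wordHessian, of_apply, add_right_comm]

omit [DecidableEq ι] in
theorem dotProduct_indicator_mulVec_nonneg {R : ι → ι → Prop} [DecidableRel R]
    (hsymm : ∀ i j, R i j → R j i) (htrans : ∀ i j k, R i j → R j k → R i k) (z : ι → ℝ) :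
    0 ≤ z ⬝ᵥ (.of fun i j => if R i j then 1 else 0 : Matrix ι ι ℝ) *ᵥ z := by
  classical
  set G : Matrix ι (Set ι) ℝ := .of fun i c => if R i i ∧ {j | R i j} = c then 1 else 0
  have hG : (.of fun i j => if R i j then 1 else 0 : Matrix ι ι ℝ) = G * Gᴴ := by
    ext i j
    have hR : R i j ↔ R i i ∧ R j j ∧ {k | R i k} = {k | R j k} := by
      refine ⟨fun h => ⟨htrans i j i h (hsymm i j h), htrans j i j (hsymm i j h) h, ?_⟩, ?_⟩
      · exact Set.ext fun k => ⟨htrans j i k (hsymm i j h), htrans i j k h⟩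
      · rintro ⟨-, hj, hij⟩
        exact (Set.ext_iff.mp hij j).mpr hj
    simp only [mul_apply, conjTranspose_apply, star_trivial, G, of_apply, ite_and, hR]
    by_cases hi : R i i <;> by_cases hj : R j j <;> simp [hi, hj, eq_comm]
  rw [hG]
  simpa using (posSemidef_self_mul_conjTranspose G).dotProduct_mulVec_nonneg z

-- Within its nonzero rows, the Hessian is all ones minus the indicator of an equivalence relation.
theorem IsMConvex.isLorentzianForm_wordHessian_zero (hB : IsMConvex B) (w : ι → ℝ) (v : ι → ℕ) :
    IsLorentzianForm (wordHessian w B 0 v) := by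
  classical
  set N : ι → Prop := fun i => ∃ a, v + 𝐞[i] + 𝐞[a] ∈ B
  set R : ι → ι → Prop := fun i j => N i ∧ N j ∧ v + 𝐞[i] + 𝐞[j] ∉ B
  set l : ι → ℝ := fun i => if N i then 1 else 0
  have hR := dotProduct_indicator_mulVec_nonneg (R := R)
    (fun i j ⟨hi, hj, hij⟩ => ⟨hj, hi, by rwa [add_right_comm]⟩)
    (fun i j k ⟨hi, hj, hij⟩ ⟨_, hk, hjk⟩ => ⟨hi, hk, hB.notMem_add_single_trans hj hij hjk⟩)
  have hH : wordHessian w B 0 v = vecMulVec l l - .of fun i j => if R i j then 1 else 0 := by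
    ext i j
    by_cases hij : v + 𝐞[i] + 𝐞[j] ∈ B
    · have hi : N i := ⟨j, hij⟩
      have hj : N j := ⟨i, by rwa [add_right_comm]⟩
      simp [wordHessian, wordSum, vecMulVec_apply, l, R, hij, hi, hj]
    · by_cases hi : N i <;> by_cases hj : N j <;>
        simp [wordHessian, wordSum, vecMulVec_apply, l, R, hij, hi, hj]
  refine ⟨l, fun z hz => ?_⟩
  rw [hH, sub_mulVec, dotProduct_sub, vecMulVec_mulVec, dotProduct_smul, hz]
  simpa using hR z

theorem IsMConvex.isLorentzianForm_wordHessian_of_pos (hB : IsMConvex B) {w : ι → ℝ}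
    (hw : ∀ i, 0 < w i) {n : ℕ} {v : ι → ℕ} (hn : ∀ u ∈ B, ∑ i, u i = ∑ i, v i + n + 2) :
    IsLorentzianForm (wordHessian w B n v) := by
  induction n generalizing v with
  | zero => exact hB.isLorentzianForm_wordHessian_zero w v
  | succ n ih =>
    have hpos : ∀ i j, 0 < wordHessian w B (n + 1) v i j ↔ ∃ u ∈ B, v + 𝐞[i] + 𝐞[j] ≤ u := by
      refine fun i j => ⟨fun h => exists_le_of_wordSum_ne_zero h.ne', fun ⟨u, hu, hle⟩ =>
        wordSum_pos hw hu hle ?_⟩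
      rw [hn u hu, sum_add_single, sum_add_single]
      ring
    refine .of_weighted_slices (S := fun l => wordHessian w B n (v + 𝐞[l])) hw
      (fun l => wordHessian_isSymm ..) (fun l i j => wordSum_nonneg (fun i => (hw i).le) ..)
      (fun l => ih fun u hu => ?_) ?_ (fun l => ?_) ?_
    · rw [hn u hu, sum_add_single]; ring
    · ext i j
      simp only [wordHessian, of_apply, wordSum, Matrix.sum_apply, Matrix.smul_apply, smul_eq_mul]
      exact Finset.sum_congr rfl fun l _ => by congr 2; abel
    · ext i
      simp only [wordHessian, of_apply, wordSum, mulVec, dotProduct]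
      exact Finset.sum_congr rfl fun j _ => mul_comm _ _
    · simp only [hpos]
      rintro i j ⟨a, u, hu, hvu⟩ ⟨b, u', hu', hvu'⟩
      exact hB.exists_path hu hvu hu' hvu'

theorem IsMConvex.isLorentzianForm_wordHessian (hB : IsMConvex B) {w : ι → ℝ}
    (hw : ∀ i, 0 ≤ w i) {n : ℕ} {v : ι → ℕ} (hn : ∀ u ∈ B, ∑ i, u i = ∑ i, v i + n + 2) :
    IsLorentzianForm (wordHessian w B n v) := by
  refine .of_mul_le_sq fun x y hy => ?_
  have hlim : ∀ x y : ι → ℝ, Filter.Tendsto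
      (fun ε : ℝ => x ⬝ᵥ wordHessian (fun i => w i + ε) B n v *ᵥ y)
      (nhdsWithin 0 (Set.Ioi 0)) (nhds (x ⬝ᵥ wordHessian w B n v *ᵥ y)) := by
    intro x y
    have hcont : Continuous fun ε : ℝ => x ⬝ᵥ wordHessian (fun i => w i + ε) B n v *ᵥ y := by
      refine continuous_finsetSum _ fun i _ => continuous_const.mul <|
        continuous_finsetSum _ fun j _ => Continuous.mul ?_ continuous_const
      exact (continuous_wordSum B n _).comp (by fun_prop)
    simpa using (hcont.tendsto 0).mono_left nhdsWithin_le_nhds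
  refine le_of_tendsto_of_tendsto ((hlim x x).mul (hlim y y)) ((hlim x y).pow 2) ?_
  filter_upwards [(hlim y y).eventually (lt_mem_nhds hy), self_mem_nhdsWithin] with ε hpos hε
  exact (hB.isLorentzianForm_wordHessian_of_pos
    (fun i => add_pos_of_nonneg_of_pos (hw i) hε) hn).mul_le_sq (wordHessian_isSymm ..) x hpos

end MConvex

/-! ### Operations on M-convex sets -/

section Operations

variable {ι κ : Type*} [DecidableEq ι] [DecidableEq κ]

theorem IsMConvex.inter {B S : Set (ι → ℕ)} (hB : IsMConvex B) (hS : IsLowerSet S)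
    (hsup : SupClosed S) : IsMConvex (B ∩ S) := by
  rintro u ⟨huB, huS⟩ v ⟨hvB, hvS⟩ i hi
  obtain ⟨j, hj, u', hu', huu'⟩ := hB u huB v hvB i hi
  refine ⟨j, hj, u', ⟨hu', hS (fun t => ?_) (hsup huS hvS)⟩, huu'⟩
  have := congr_fun huu' t
  simp only [Pi.add_apply, Pi.single_apply, Pi.sup_apply] at this ⊢
  grind

theorem exists_add_single_eq {p : ι → ℕ} {j : ι} (hj : 0 < p j) : ∃ p', p' + 𝐞[j] = p :=
  ⟨p - 𝐞[j], tsub_add_cancel_of_le fun t => by rw [Pi.single_apply]; split_ifs <;> grind⟩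

theorem sum_add_ite_eq_of_add_single_eq {u u' : ι → ℕ} {i j : ι} (h : u' + 𝐞[j] = u + 𝐞[i])
    (I : Finset ι) :
    ∑ t ∈ I, u' t + (if j ∈ I then 1 else 0) = ∑ t ∈ I, u t + if i ∈ I then 1 else 0 := by
  have := congr_arg (fun f : ι → ℕ => ∑ t ∈ I, f t) h
  simpa only [Pi.add_apply, Finset.sum_add_distrib, Finset.sum_pi_single'] using this

variable [Fintype ι]

theorem sum_eq_of_add_single_eq {p p' : ι → ℕ} {i j : ι} (h : p' + 𝐞[j] = p + 𝐞[i]) :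
    ∑ t, p' t = ∑ t, p t := by
  have := congr_arg (fun f : ι → ℕ => ∑ t, f t) h
  simpa only [sum_add_single, add_left_inj] using this

theorem sum_tsub_lt_of_add_single_eq {p p' q : ι → ℕ} {i j : ι} (h : p' + 𝐞[j] = p + 𝐞[i])
    (hi : p i < q i) (hj : q j < p j) : ∑ t, (q t - p' t) < ∑ t, (q t - p t) := by
  simp only [funext_iff, Pi.add_apply, Pi.single_apply] at h
  exact Finset.sum_lt_sum (fun t _ => by grind) ⟨i, Finset.mem_univ i, by grind⟩

/-- The pushforward of the vector `p` along `ρ`: coordinates with the same image are added. -/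
def fiberSum (ρ : ι → κ) (p : ι → ℕ) (k : κ) : ℕ :=
  ∑ i with ρ i = k, p i

theorem fiberSum_add_single (ρ : ι → κ) (p : ι → ℕ) (i : ι) :
    fiberSum ρ (p + 𝐞[i]) = fiberSum ρ p + 𝐞[ρ i] := by
  ext k
  simp [fiberSum, Finset.sum_add_distrib, Pi.single_apply, eq_comm]

omit [DecidableEq ι] in
theorem sum_fiberSum [Fintype κ] (ρ : ι → κ) (p : ι → ℕ) : ∑ k, fiberSum ρ p k = ∑ i, p i :=
  Finset.sum_fiberwise _ _ _

theorem fiberSum_add_single_eq (ρ : ι → κ) {p p' : ι → ℕ} {i j : ι} (h : p' + 𝐞[j] = p + 𝐞[i]) :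
    fiberSum ρ p' + 𝐞[ρ j] = fiberSum ρ p + 𝐞[ρ i] := by
  rw [← fiberSum_add_single, h, fiberSum_add_single]

theorem IsMConvex.preimage_fiberSum {B : Set (κ → ℕ)} (hB : IsMConvex B) (ρ : ι → κ) :
    IsMConvex (fiberSum ρ ⁻¹' B) := by
  intro p hp q hq i hi
  suffices ∃ j, q j < p j ∧ ∃ u ∈ B, u + 𝐞[ρ j] = fiberSum ρ p + 𝐞[ρ i] by
    obtain ⟨j, hj, u, hu, hup⟩ := this
    obtain ⟨p', rfl⟩ := exists_add_single_eq (Nat.zero_lt_of_lt hj)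
    refine ⟨j, hj, p' + 𝐞[i], ?_, add_right_comm ..⟩
    have := fiberSum_add_single_eq ρ (add_right_comm p' 𝐞[i] 𝐞[j])
    rwa [Set.mem_preimage, add_right_cancel (this.trans hup.symm)]
  by_cases h : fiberSum ρ p (ρ i) < fiberSum ρ q (ρ i)
  · obtain ⟨l, hl, u, hu, hup⟩ := hB _ hp _ hq _ h
    obtain ⟨j, hj, hlt⟩ := Finset.exists_lt_of_sum_lt hl
    obtain rfl := (Finset.mem_filter.mp hj).2
    exact ⟨j, hlt, u, hu, hup⟩
  · obtain ⟨j, hj, hlt⟩ : ∃ j ∈ Finset.univ.filter (ρ · = ρ i), q j < p j := by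
      by_contra! hle
      exact h (Finset.sum_lt_sum hle ⟨i, by simp, hi⟩)
    exact ⟨j, hlt, _, hp, by rw [(Finset.mem_filter.mp hj).2]⟩

theorem IsMConvex.image_fiberSum {B : Set (ι → ℕ)} (hB : IsMConvex B) (ρ : ι → κ) :
    IsMConvex (fiberSum ρ '' B) := by
  rintro _ ⟨p, hp, rfl⟩ _ ⟨q, hq, rfl⟩ k hk
  simp only [Set.exists_mem_image]
  induction hd : ∑ i, (q i - p i) using Nat.strong_induction_on generalizing p k with
  | _ d ih =>
  subst hd
  obtain ⟨i, hik, hi⟩ := Finset.exists_lt_of_sum_lt hk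
  obtain rfl := (Finset.mem_filter.mp hik).2
  obtain ⟨j, hj, p', hp', hpp'⟩ := hB p hp q hq i hi
  have hdist := sum_tsub_lt_of_add_single_eq hpp' hi hj
  have hfib := fiberSum_add_single_eq ρ hpp'
  by_cases hji : ρ j = ρ i
  · rw [hji, add_left_inj] at hfib
    simpa only [hfib] using ih _ hdist p' hp' (ρ i) (by rwa [hfib]) rfl
  by_cases hlt : fiberSum ρ q (ρ j) < fiberSum ρ p (ρ j)
  · exact ⟨ρ j, hlt, p', hp', hfib⟩
  have hcoord := fun t => congr_fun hfib t
  simp only [Pi.add_apply, Pi.single_apply] at hcoord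
  obtain ⟨l, hl, p'', hp'', hpp''⟩ := ih _ hdist p' hp' (ρ j) (by grind) rfl
  exact ⟨l, by grind, p'', hp'', hpp''.trans hfib⟩

end Operations

/-! ### Lattice points of base polytopes -/

section Exchange

variable {ι : Type*} [DecidableEq ι] {B : Set (ι → ℕ)}

theorem IsMConvex.exists_add_single_eq_trans (hB : IsMConvex B) {u v w : ι → ℕ} {i j k : ι}
    (hu : u ∈ B) (hv : v ∈ B) (hvu : v + 𝐞[i] = u + 𝐞[k]) (hw : w ∈ B)
    (hwu : w + 𝐞[j] = u + 𝐞[i]) : ∃ x ∈ B, x + 𝐞[j] = u + 𝐞[k] := by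
  obtain rfl | hik := eq_or_ne i k
  · exact ⟨w, hw, hwu⟩
  obtain rfl | hij := eq_or_ne i j
  · exact ⟨v, hv, hvu⟩
  obtain rfl | hjk := eq_or_ne j k
  · exact ⟨u, hu, rfl⟩
  have hv' := fun t => congr_fun hvu t
  have hw' := fun t => congr_fun hwu t
  simp only [Pi.add_apply, Pi.single_apply] at hv' hw'
  obtain ⟨t, ht, x, hx, hxw⟩ := hB w hw v hv k (by grind)
  obtain rfl : t = i := by grind
  refine ⟨x, hx, add_right_cancel (b := 𝐞[t]) ?_⟩
  rw [add_right_comm, hxw, add_right_comm, hwu, add_right_comm]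

variable [Finite ι]

theorem IsMConvex.exists_sum_le_sum (hB : IsMConvex B) {I J : Finset ι} (hIJ : I ⊆ J)
    {u v : ι → ℕ} (hu : u ∈ B) (hv : v ∈ B) :
    ∃ w ∈ B, ∑ i ∈ I, u i ≤ ∑ i ∈ I, w i ∧ ∑ i ∈ J, v i ≤ ∑ i ∈ J, w i := by
  cases nonempty_fintype ι
  induction hn : ∑ i, (u i - v i) using Nat.strong_induction_on generalizing v with
  | _ n ih =>
  subst hn
  by_cases hle : ∑ i ∈ I, u i ≤ ∑ i ∈ I, v i
  · exact ⟨v, hv, hle, le_rfl⟩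
  obtain ⟨i, hiI, hi⟩ := Finset.exists_lt_of_sum_lt (not_le.mp hle)
  obtain ⟨j, hj, v', hv', hvv'⟩ := hB v hv u hu i hi
  obtain ⟨w, hw, hIw, hJw⟩ := ih _ (sum_tsub_lt_of_add_single_eq hvv' hi hj) hv' rfl
  have hJ := sum_add_ite_eq_of_add_single_eq hvv' J
  rw [if_pos (hIJ hiI)] at hJ
  exact ⟨w, hw, hIw, by grind⟩

theorem IsMConvex.sum_le_sum_of_exchange_closed (hB : IsMConvex B) {u v : ι → ℕ} (hu : u ∈ B)
    (hv : v ∈ B) {A : Finset ι}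
    (hA : ∀ i ∈ A, ∀ j, ∀ w ∈ B, w + 𝐞[j] = u + 𝐞[i] → j ∈ A) :
    ∑ i ∈ A, v i ≤ ∑ i ∈ A, u i := by
  cases nonempty_fintype ι
  induction hn : ∑ i, (u i - v i) using Nat.strong_induction_on generalizing v with
  | _ n ih =>
  subst hn
  by_contra! hlt
  obtain ⟨i, hiA, hi⟩ := Finset.exists_lt_of_sum_lt hlt
  obtain ⟨j, hj, w, hw, hwu⟩ := hB u hu v hv i hi
  have hjA := hA i hiA j w hw hwu
  obtain ⟨k, hk, v', hv', hvv'⟩ := hB v hv u hu j hj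
  have hle := ih _ (sum_tsub_lt_of_add_single_eq hvv' hj hk) hv' rfl
  have := sum_add_ite_eq_of_add_single_eq hvv' A
  grind

end Exchange

section BaseLattice

variable {ι : Type*} [Fintype ι]

/-- The lattice points of the independence polytope of a polymatroid. -/
def indepLattice (rk : Finset ι → ℕ) : Set (ι → ℕ) :=
  {u | ∀ I, ∑ i ∈ I, u i ≤ rk I}

/-- The lattice points of the base polytope of a polymatroid. -/
def baseLattice (rk : Finset ι → ℕ) : Set (ι → ℕ) :=
  {u | ∑ i, u i = rk univ ∧ u ∈ indepLattice rk}

theorem natCast_mem_indepPolytope {rk : Finset ι → ℕ} {u : ι → ℕ} :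
    (fun i => (u i : ℝ)) ∈ indepPolytope rk ↔ u ∈ indepLattice rk := by
  simp only [indepPolytope, indepLattice, Set.mem_ofPred_eq, Nat.cast_nonneg, implies_true,
    true_and]
  exact_mod_cast Iff.rfl

theorem natCast_mem_basePolytope {rk : Finset ι → ℕ} {u : ι → ℕ} :
    (fun i => (u i : ℝ)) ∈ basePolytope rk ↔ u ∈ baseLattice rk := by
  simp only [basePolytope, baseLattice, indepLattice, Set.mem_ofPred_eq, Nat.cast_nonneg,
    implies_true, true_and]
  exact_mod_cast Iff.rfl

variable [DecidableEq ι]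

theorem IsPolymatroid.sum_inter_eq {rk : Finset ι → ℕ} (hrk : IsPolymatroid rk) {u : ι → ℕ}
    (hu : u ∈ indepLattice rk) {I J : Finset ι} (hI : ∑ i ∈ I, u i = rk I)
    (hJ : ∑ i ∈ J, u i = rk J) : ∑ i ∈ I ∩ J, u i = rk (I ∩ J) := by
  have hsub := hrk.2.2 I J
  have hinter := hu (I ∩ J)
  have hunion := hu (I ∪ J)
  have := Finset.sum_union_inter (s₁ := I) (s₂ := J) (f := u)
  omega

-- The coordinates `j` for which `u - 𝐞[j] + 𝐞[i]` stays in the base polytope form the smallest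
-- tight set of `u` containing `i`.
theorem IsPolymatroid.isMConvex_baseLattice {rk : Finset ι → ℕ} (hrk : IsPolymatroid rk) :
    IsMConvex (baseLattice rk) := by
  rintro u ⟨hu, hui⟩ v ⟨-, hvi⟩ i hi
  set D : Finset ι := ({T | i ∈ T ∧ ∑ t ∈ T, u t = rk T} : Finset (Finset ι)).inf id
  obtain ⟨hiD, hD⟩ : i ∈ D ∧ ∑ t ∈ D, u t = rk D := by
    refine Finset.inf_induction (p := fun T => i ∈ T ∧ ∑ t ∈ T, u t = rk T)
      ⟨Finset.mem_univ i, hu⟩ ?_ (by simp)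
    rintro I ⟨hiI, hI⟩ J ⟨hiJ, hJ⟩
    exact ⟨Finset.mem_inter.mpr ⟨hiI, hiJ⟩, hrk.sum_inter_eq hui hI hJ⟩
  have hDmin : ∀ T, i ∈ T → ∑ t ∈ T, u t = rk T → D ⊆ T := fun T hiT hT =>
    Finset.inf_le (f := id) (by simp [hiT, hT])
  obtain ⟨j, hjD, hj⟩ : ∃ j ∈ D, v j < u j := by
    by_contra! hle
    exact ((hvi D).trans_eq hD.symm).not_gt (Finset.sum_lt_sum hle ⟨i, hiD, hi⟩)
  obtain ⟨p, rfl⟩ := exists_add_single_eq (Nat.zero_lt_of_lt hj)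
  have hp : p + 𝐞[i] + 𝐞[j] = p + 𝐞[j] + 𝐞[i] := add_right_comm ..
  refine ⟨j, hj, p + 𝐞[i], ⟨(sum_eq_of_add_single_eq hp).trans hu, fun I => ?_⟩, hp⟩
  have hI := sum_add_ite_eq_of_add_single_eq hp I
  have huI := hui I
  by_cases hiI : i ∈ I <;> by_cases hjI : j ∈ I <;> simp only [hiI, hjI, if_true, if_false] at hI
  · omega
  · have := mt (hDmin I hiI) fun h => hjI (h hjD)
    omega
  · omega
  · omega

section Rank

variable {B : Set (ι → ℕ)} {d : ℕ}

/-- The rank function of a set of lattice points, whose base polytope is the convex hull of the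
set if that set is M-convex. The supremum is only meaningful when coordinate sums are bounded. -/
noncomputable def latticeRank (B : Set (ι → ℕ)) (I : Finset ι) : ℕ :=
  sSup ((fun u => ∑ i ∈ I, u i) '' B)

omit [DecidableEq ι] in
theorem bddAbove_sum_image (hd : ∀ u ∈ B, ∑ i, u i = d) (I : Finset ι) :
    BddAbove ((fun u => ∑ i ∈ I, u i) '' B) :=
  ⟨d, by
    rintro _ ⟨u, hu, rfl⟩
    exact (Finset.sum_le_sum_of_subset (Finset.subset_univ I)).trans_eq (hd u hu)⟩

omit [DecidableEq ι] in
theorem sum_le_latticeRank (hd : ∀ u ∈ B, ∑ i, u i = d) {u : ι → ℕ} (hu : u ∈ B)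
    (I : Finset ι) : ∑ i ∈ I, u i ≤ latticeRank B I :=
  le_csSup (bddAbove_sum_image hd I) ⟨u, hu, rfl⟩

omit [DecidableEq ι] in
theorem exists_sum_eq_latticeRank (hne : B.Nonempty) (hd : ∀ u ∈ B, ∑ i, u i = d)
    (I : Finset ι) : ∃ u ∈ B, ∑ i ∈ I, u i = latticeRank B I :=
  Nat.sSup_mem (hne.image _) (bddAbove_sum_image hd I)

theorem IsMConvex.isPolymatroid_latticeRank (hB : IsMConvex B) (hne : B.Nonempty)
    (hd : ∀ u ∈ B, ∑ i, u i = d) : IsPolymatroid (latticeRank B) := by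
  refine ⟨?_, fun I J hIJ => ?_, fun I J => ?_⟩
  · obtain ⟨u, -, hu⟩ := exists_sum_eq_latticeRank hne hd ∅
    simpa using hu.symm
  · obtain ⟨u, huB, hu⟩ := exists_sum_eq_latticeRank hne hd I
    exact hu ▸ (Finset.sum_le_sum_of_subset hIJ).trans (sum_le_latticeRank hd huB J)
  · obtain ⟨u, huB, hu⟩ := exists_sum_eq_latticeRank hne hd (I ∩ J)
    obtain ⟨v, hvB, hv⟩ := exists_sum_eq_latticeRank hne hd (I ∪ J)
    obtain ⟨w, hw, hinter, hunion⟩ :=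
      hB.exists_sum_le_sum (Finset.inter_subset_left.trans Finset.subset_union_left) huB hvB
    calc latticeRank B (I ∩ J) + latticeRank B (I ∪ J)
        ≤ ∑ i ∈ I ∪ J, w i + ∑ i ∈ I ∩ J, w i := by rw [← hu, ← hv, add_comm]; gcongr
      _ = ∑ i ∈ I, w i + ∑ i ∈ J, w i := Finset.sum_union_inter
      _ ≤ latticeRank B I + latticeRank B J :=
        add_le_add (sum_le_latticeRank hd hw I) (sum_le_latticeRank hd hw J)

-- At a point `u` of `B` nearest to `x` with `u k < x k`, the set of all `j` with
-- `u - 𝐞[j] + 𝐞[k] ∈ B` is tight for `u` but `x` is larger than `u` on it.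
theorem IsMConvex.mem_of_forall_sum_le_latticeRank (hB : IsMConvex B) (hne : B.Nonempty)
    (hd : ∀ u ∈ B, ∑ i, u i = d) {x : ι → ℕ} (hx : ∑ i, x i = d)
    (hxI : ∀ I, ∑ i ∈ I, x i ≤ latticeRank B I) : x ∈ B := by
  classical
  obtain ⟨u, hu, hmin⟩ := WellFounded.has_min
    (measure fun u : ι → ℕ => ∑ i, (x i - u i)).wf B hne
  by_contra hxB
  obtain ⟨k, hk⟩ : ∃ k, u k < x k := by
    by_contra! hle
    have heq := (Finset.sum_eq_sum_iff_of_le fun i _ => hle i).mp (hx.trans (hd u hu).symm)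
    exact hxB ((funext fun i => heq i (Finset.mem_univ i) : x = u) ▸ hu)
  set A : Finset ι := {j | ∃ w ∈ B, w + 𝐞[j] = u + 𝐞[k]} with hA
  have hkA : k ∈ A := by simp only [hA, Finset.mem_filter_univ]; exact ⟨u, hu, rfl⟩
  have hle : ∀ j ∈ A, u j ≤ x j := by
    intro j hj
    obtain ⟨w, hw, hwu⟩ := (Finset.mem_filter_univ j).mp hj
    by_contra! hlt
    exact hmin w hw (sum_tsub_lt_of_add_single_eq hwu hk hlt)
  obtain ⟨v, hv, hvA⟩ := exists_sum_eq_latticeRank hne hd A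
  have hvu : ∑ i ∈ A, v i ≤ ∑ i ∈ A, u i := by
    refine hB.sum_le_sum_of_exchange_closed hu hv fun i hi j w' hw' hwu' => ?_
    obtain ⟨w, hw, hwu⟩ := (Finset.mem_filter_univ i).mp hi
    exact (Finset.mem_filter_univ j).mpr (hB.exists_add_single_eq_trans hu hw hwu hw' hwu')
  exact ((hxI A).trans (hvA ▸ hvu)).not_gt (Finset.sum_lt_sum hle ⟨k, hkA, hk⟩)

theorem IsMConvex.baseLattice_latticeRank (hB : IsMConvex B) (hne : B.Nonempty)
    (hd : ∀ u ∈ B, ∑ i, u i = d) : baseLattice (latticeRank B) = B := by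
  obtain ⟨v, hv, hvd⟩ := exists_sum_eq_latticeRank hne hd univ
  rw [hd v hv] at hvd
  refine Set.Subset.antisymm (fun x hx => ?_) fun u hu => ?_
  · exact hB.mem_of_forall_sum_le_latticeRank hne hd (hx.1.trans hvd.symm) hx.2
  · exact ⟨(hd u hu).trans hvd, sum_le_latticeRank hd hu⟩

end Rank

end BaseLattice

/-! ### Splitting coordinates and counting subsets -/

section SubsetCount

variable {ι : Type*} [DecidableEq ι]

/-- The 0/1 indicator vector of a finite set. -/
def charVec (S : Finset ι) (i : ι) : ℕ :=
  if i ∈ S then 1 else 0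

theorem charVec_empty : charVec (∅ : Finset ι) = 0 := rfl

theorem charVec_insert {i : ι} {S : Finset ι} (hi : i ∉ S) :
    charVec (insert i S) = charVec S + 𝐞[i] := by
  ext t
  simp only [charVec, Finset.mem_insert, Pi.add_apply, Pi.single_apply]
  grind

theorem charVec_le_charVec {S T : Finset ι} : charVec S ≤ charVec T ↔ S ⊆ T := by
  simp only [Pi.le_def, charVec, Finset.subset_iff]
  exact forall_congr' fun i => by grind

theorem exists_charVec_eq {T : Finset ι} {q : ι → ℕ} (hq : q ≤ charVec T) :
    ∃ S ⊆ T, charVec S = q := by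
  have hS : charVec {i ∈ T | q i = 1} = q := funext fun i => by
    have := hq i
    simp only [charVec, Finset.mem_filter] at this ⊢
    grind
  exact ⟨_, charVec_le_charVec.mp (hS.trans_le hq), hS⟩

theorem sumElim_charVec_add_single {k : ι → ℕ} {S : Finset ι} {i : ι} (hi : i ∉ S) :
    Sum.elim k (charVec S) + 𝐞[Sum.inr i] = Sum.elim k (charVec (insert i S)) := by
  ext (t | t) <;> simp [charVec_insert hi, Pi.single_apply]

theorem sumElim_add_single_inl (k q : ι → ℕ) (i : ι) :
    Sum.elim k q + 𝐞[Sum.inl i] = Sum.elim (k + 𝐞[i]) q := by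
  ext (t | t) <;> simp [Pi.single_apply]

theorem sum_charVec [Fintype ι] (S : Finset ι) : ∑ i, charVec S i = #S := by
  simp [charVec]

theorem sum_card_filter_mem_sdiff [Fintype ι] {F : Finset (Finset ι)} {S₀ : Finset ι} {n : ℕ}
    (hF : ∀ S ∈ F, S₀ ⊆ S ∧ #S = #S₀ + n) : ∑ i, #{S ∈ F | i ∈ S \ S₀} = n * #F :=
  calc ∑ i, #{S ∈ F | i ∈ S \ S₀} = ∑ S ∈ F, #(S \ S₀) := by
        refine (Finset.sum_card_bipartiteAbove_eq_sum_card_bipartiteBelow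
          fun i S => i ∈ S \ S₀).trans ?_
        simp only [Finset.bipartiteBelow, Finset.filter_univ_mem]
    _ = ∑ _ ∈ F, n := Finset.sum_congr rfl fun S hS => by
        rw [Finset.card_sdiff_of_subset (hF S hS).1, (hF S hS).2, Nat.add_sub_cancel_left]
    _ = n * #F := by rw [Finset.sum_const, smul_eq_mul, mul_comm]

open Classical in
/-- The number of subsets `S ⊆ T` with `k + 1_S ∈ B`. -/
noncomputable def subsetCount (T : Finset ι) (B : Set (ι → ℕ)) (k : ι → ℕ) : ℕ :=
  #{S ∈ T.powerset | k + charVec S ∈ B}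

variable [Fintype ι] {T : Finset ι} {B : Set (ι → ℕ)} {d : ℕ}

/-- The vectors `(k, q)` with `k + q ∈ B` and `q ≤ 1_T`. Adding up all coordinates of `q` gives a
vector with `subsetCount T B k` preimages. -/
def splitSet (T : Finset ι) (B : Set (ι → ℕ)) : Set (ι ⊕ ι → ℕ) :=
  fiberSum (Sum.elim id id) ⁻¹' B ∩ {p | ∀ i, p (.inr i) ≤ charVec T i}

theorem fiberSum_sumElim_id_sumElim (k q : ι → ℕ) :
    fiberSum (Sum.elim id id) (Sum.elim k q) = k + q := by
  ext t
  rw [fiberSum, Finset.sum_filter, Fintype.sum_sum_type]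
  exact congr_arg₂ (· + ·) (Fintype.sum_ite_eq' t k) (Fintype.sum_ite_eq' t q)

theorem mem_splitSet_sumElim {k q : ι → ℕ} :
    Sum.elim k q ∈ splitSet T B ↔ k + q ∈ B ∧ q ≤ charVec T := by
  rw [splitSet, Set.mem_inter_iff, Set.mem_preimage, fiberSum_sumElim_id_sumElim]
  rfl

theorem sum_eq_of_mem_splitSet (hd : ∀ u ∈ B, ∑ i, u i = d) {p : ι ⊕ ι → ℕ}
    (hp : p ∈ splitSet T B) : ∑ i, p i = d := by
  rw [← hd _ hp.1, sum_fiberSum]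

theorem IsMConvex.splitSet (hB : IsMConvex B) (T : Finset ι) : IsMConvex (splitSet T B) :=
  (hB.preimage_fiberSum _).inter (fun _ _ hle hp i => (hle _).trans (hp i))
    fun _ hp _ hq i => sup_le (hp i) (hq i)

theorem wordSum_splitSet_succ (n : ℕ) (v : ι ⊕ ι → ℕ) :
    wordSum (Sum.elim 0 1) (splitSet T B) (n + 1) v =
      ∑ i, wordSum (Sum.elim 0 1) (splitSet T B) n (v + 𝐞[Sum.inr i]) := by
  simp [wordSum, Fintype.sum_sum_type]

theorem wordSum_splitSet_eq_zero {k : ι → ℕ} {S : Finset ι} {i : ι} (hi : i ∈ S) (n : ℕ) :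
    wordSum (Sum.elim 0 1) (splitSet T B) n (Sum.elim k (charVec S) + 𝐞[Sum.inr i]) = 0 := by
  by_contra h
  obtain ⟨u, ⟨-, hu⟩, hle⟩ := exists_le_of_wordSum_ne_zero h
  have h2 : charVec S i + 1 ≤ u (.inr i) := by simpa using hle (.inr i)
  have h1 := hu i
  simp only [charVec, hi, if_true] at h1 h2
  split_ifs at h1 <;> omega

-- Each `S` arises from the `n!` orderings of `S \ S₀`.
open Classical in
theorem wordSum_splitSet_charVec (n : ℕ) (k : ι → ℕ) (S₀ : Finset ι) :
    wordSum (Sum.elim 0 1) (splitSet T B) n (Sum.elim k (charVec S₀)) =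
      n.factorial * #{S ∈ T.powerset | k + charVec S ∈ B ∧ S₀ ⊆ S ∧ #S = #S₀ + n} := by
  induction n generalizing S₀ with
  | zero =>
    have hfilter : {S ∈ T.powerset | k + charVec S ∈ B ∧ S₀ ⊆ S ∧ #S = #S₀ + 0} =
        if Sum.elim k (charVec S₀) ∈ splitSet T B then {S₀} else ∅ := by
      rw [mem_splitSet_sumElim, charVec_le_charVec]
      ext S
      have : S₀ ⊆ S ∧ #S = #S₀ ↔ S = S₀ :=
        ⟨fun h => (Finset.eq_of_subset_of_card_le h.1 h.2.le).symm, by rintro rfl; simp⟩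
      simp only [add_zero, this, Finset.mem_filter, Finset.mem_powerset]
      grind
    rw [hfilter, wordSum]
    split_ifs <;> simp
  | succ n ih =>
    set F := {S ∈ T.powerset | k + charVec S ∈ B ∧ S₀ ⊆ S ∧ #S = #S₀ + (n + 1)} with hF
    have hterm : ∀ i, wordSum (Sum.elim 0 1) (splitSet T B) n
        (Sum.elim k (charVec S₀) + 𝐞[Sum.inr i]) = n.factorial * #{S ∈ F | i ∈ S \ S₀} := by
      intro i
      by_cases hi : i ∈ S₀
      · simp [wordSum_splitSet_eq_zero hi, hi]
      · rw [sumElim_charVec_add_single hi, ih, hF, Finset.filter_filter,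
          Finset.card_insert_of_notMem hi]
        congr 3
        ext S
        simp only [Finset.insert_subset_iff, Finset.mem_filter, Finset.mem_sdiff]
        grind
    simp only [wordSum_splitSet_succ, hterm]
    rw [← Finset.mul_sum, ← Nat.cast_sum,
      sum_card_filter_mem_sdiff fun S hS => (Finset.mem_filter.mp hS).2.2, Nat.factorial_succ]
    push_cast
    ring

theorem wordSum_splitSet (hd : ∀ u ∈ B, ∑ i, u i = d) {n : ℕ} {k : ι → ℕ}
    (hn : ∑ i, k i + n = d) :
    wordSum (Sum.elim 0 1) (splitSet T B) n (Sum.elim k 0) = n.factorial * subsetCount T B k := by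
  rw [← charVec_empty, wordSum_splitSet_charVec, subsetCount]
  congr 4
  ext S
  refine and_iff_left_of_imp fun hS => ⟨Finset.empty_subset S, ?_⟩
  have := hd _ hS
  simp only [Pi.add_apply, Finset.sum_add_distrib, sum_charVec] at this
  rw [Finset.card_empty]
  omega

open Matrix in
theorem dotProduct_wordHessian_splitSet_mulVec (n : ℕ) (k : ι → ℕ) (y : ι → ℝ) (t : ℝ) :
    let W := fun n k => wordSum (Sum.elim 0 1) (splitSet T B) n (Sum.elim k 0)
    (Sum.elim y fun _ => t) ⬝ᵥ
        wordHessian (Sum.elim 0 1) (splitSet T B) n (Sum.elim k 0) *ᵥ (Sum.elim y fun _ => t) =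
      ∑ i, ∑ j, y i * W n (k + 𝐞[i] + 𝐞[j]) * y j +
        2 * t * ∑ i, y i * W (n + 1) (k + 𝐞[i]) + t ^ 2 * W (n + 2) k := by
  intro W
  let X := fun i j => wordSum (Sum.elim 0 1) (splitSet T B) n
    (Sum.elim k 0 + 𝐞[Sum.inl i] + 𝐞[Sum.inr j])
  have hcross : ∀ i, ∑ j, X i j = W (n + 1) (k + 𝐞[i]) := fun i => by
    simp only [X, W, wordSum_splitSet_succ, sumElim_add_single_inl]
  have hinl : ∀ i j, wordSum (Sum.elim 0 1) (splitSet T B) n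
      (Sum.elim k 0 + 𝐞[Sum.inl i] + 𝐞[Sum.inl j]) = W n (k + 𝐞[i] + 𝐞[j]) := fun i j => by
    simp only [W, sumElim_add_single_inl]
  have hinr : ∑ i, ∑ j, wordSum (Sum.elim 0 1) (splitSet T B) n
      (Sum.elim k 0 + 𝐞[Sum.inr i] + 𝐞[Sum.inr j]) = W (n + 2) k := by
    simp only [W, wordSum_splitSet_succ]
  simp only [dotProduct, mulVec, Fintype.sum_sum_type, Sum.elim_inl, Sum.elim_inr, wordHessian,
    of_apply, mul_add, Finset.sum_add_distrib, hinl, add_right_comm _ 𝐞[Sum.inr _] 𝐞[Sum.inl _],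
    ← hcross, ← hinr, Finset.mul_sum]
  rw [Finset.sum_comm (f := fun j i => t * (X i j * y i))]
  simp only [← Finset.sum_add_distrib]
  exact Finset.sum_congr rfl fun i _ => Finset.sum_congr rfl fun j _ => by ring

open Matrix in
theorem dotProduct_wordHessian_splitSet_mulVec_eq (hd : ∀ u ∈ B, ∑ i, u i = d) {n : ℕ} {k : ι → ℕ}
    (hn : ∑ i, k i + n + 2 = d) (y : ι → ℝ) (t : ℝ) :
    (Sum.elim y fun _ => t) ⬝ᵥ
        wordHessian (Sum.elim 0 1) (splitSet T B) n (Sum.elim k 0) *ᵥ (Sum.elim y fun _ => t) =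
      n.factorial * (∑ i, ∑ j, y i * subsetCount T B (k + 𝐞[i] + 𝐞[j]) * y j +
        2 * (n + 1) * t * ∑ i, y i * subsetCount T B (k + 𝐞[i]) +
        (n + 2) * (n + 1) * t ^ 2 * subsetCount T B k) := by
  have h0 : ∀ i j, ∑ t, (k + 𝐞[i] + 𝐞[j] : ι → ℕ) t + n = d := fun i j => by
    rw [sum_add_single, sum_add_single, ← hn]; ring
  have h1 : ∀ i, ∑ t, (k + 𝐞[i] : ι → ℕ) t + (n + 1) = d := fun i => by
    rw [sum_add_single, ← hn]; ring
  have h2 : ∑ t, k t + (n + 2) = d := hn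
  simp only [dotProduct_wordHessian_splitSet_mulVec, wordSum_splitSet hd (h0 _ _),
    wordSum_splitSet hd (h1 _), wordSum_splitSet hd h2, Nat.factorial_succ, Nat.cast_mul,
    mul_left_comm (y _), mul_assoc (n.factorial : ℝ), mul_assoc (((n + 1 : ℕ) : ℝ)),
    ← Finset.mul_sum]
  push_cast
  ring

end SubsetCount

/-! ### Merging the subset variables -/

section Merge

variable {m d : ℕ} {T : Finset (Fin m)} {B : Set (Fin m → ℕ)}

/-- The number of points of `splitSet T B` over `α` when the coordinates in the second copy are
added up to a single coordinate with index `0`, provided that `d` is the coordinate sum of all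
elements of `B`. -/
noncomputable def homogCount (T : Finset (Fin m)) (B : Set (Fin m → ℕ)) (d : ℕ)
    (α : Fin (m + 1) → ℕ) : ℕ :=
  if ∑ i, α i = d then subsetCount T B (Fin.tail α) else 0

theorem tail_add_single_zero (α : Fin (m + 1) → ℕ) : Fin.tail (α + 𝐞[0]) = Fin.tail α := by
  ext t
  simp [Fin.tail]

theorem tail_add_single_succ (α : Fin (m + 1) → ℕ) (i : Fin m) :
    Fin.tail (α + 𝐞[i.succ]) = Fin.tail α + 𝐞[i] := by
  ext t
  simp [Fin.tail, Pi.single_apply]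

theorem fiberSum_sumElim_succ_sumElim (k q : Fin m → ℕ) :
    fiberSum (Sum.elim Fin.succ fun _ => 0) (Sum.elim k q) = Fin.cons (∑ i, q i) k := by
  ext i
  induction i using Fin.cases <;>
    simp [fiberSum, Finset.sum_filter, Fintype.sum_sum_type, (Fin.succ_ne_zero _).symm]

theorem setOf_homogCount_pos_eq_image (hd : ∀ u ∈ B, ∑ i, u i = d) :
    {α | 0 < homogCount T B d α} = fiberSum (Sum.elim Fin.succ fun _ => 0) '' splitSet T B := by
  classical
  ext α
  constructor
  · intro hα
    obtain ⟨hsum, hα⟩ : ∑ i, α i = d ∧ 0 < subsetCount T B (Fin.tail α) := by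
      simpa [homogCount, Nat.pos_iff_ne_zero] using hα
    obtain ⟨S, hS⟩ := Finset.card_pos.mp hα
    obtain ⟨hST, hSB⟩ := Finset.mem_filter.mp hS
    have hmem : Sum.elim (Fin.tail α) (charVec S) ∈ splitSet T B :=
      mem_splitSet_sumElim.mpr ⟨hSB, charVec_le_charVec.mpr (Finset.mem_powerset.mp hST)⟩
    refine ⟨_, hmem, ?_⟩
    have := sum_eq_of_mem_splitSet hd hmem
    rw [← hsum, Fintype.sum_sum_type, Fin.sum_univ_succ] at this
    rw [fiberSum_sumElim_succ_sumElim, ← Fin.cons_self_tail α]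
    congr 1
    simp only [Sum.elim_inl, Sum.elim_inr, Fin.tail] at this ⊢
    omega
  · rintro ⟨p, hp, rfl⟩
    obtain ⟨S, hST, hS⟩ := exists_charVec_eq (q := p ∘ Sum.inr) (T := T) hp.2
    have hpS : p = Sum.elim (p ∘ Sum.inl) (charVec S) := by rw [hS, Sum.elim_comp_inl_inr]
    have hpB : p ∘ Sum.inl + charVec S ∈ B := (mem_splitSet_sumElim.mp (hpS ▸ hp)).1
    rw [Set.mem_ofPred_eq, homogCount,
      if_pos ((sum_fiberSum _ p).trans (sum_eq_of_mem_splitSet hd hp)), hpS,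
      fiberSum_sumElim_succ_sumElim, Fin.tail_cons]
    exact Finset.card_pos.mpr ⟨S, by simp [hST, hpB]⟩

theorem IsMConvex.setOf_homogCount_pos (hB : IsMConvex B) (hd : ∀ u ∈ B, ∑ i, u i = d) :
    IsMConvex {α | 0 < homogCount T B d α} := by
  rw [setOf_homogCount_pos_eq_image hd]
  exact (hB.splitSet T).image_fiberSum _

theorem homogCount_pos_nonempty (hd : ∀ u ∈ B, ∑ i, u i = d) (hne : B.Nonempty) :
    {α | 0 < homogCount T B d α}.Nonempty := by
  obtain ⟨u, hu⟩ := hne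
  rw [setOf_homogCount_pos_eq_image hd]
  exact Set.Nonempty.image _ ⟨Sum.elim u 0, mem_splitSet_sumElim.mpr ⟨hu, zero_le⟩⟩

open Matrix in
theorem dotProduct_mulVec_fin_succ {A : Matrix (Fin (m + 1)) (Fin (m + 1)) ℝ} (hA : A.IsSymm)
    (z : Fin (m + 1) → ℝ) :
    z ⬝ᵥ A *ᵥ z = ∑ i : Fin m, ∑ j : Fin m, z i.succ * A i.succ j.succ * z j.succ +
      2 * z 0 * ∑ i : Fin m, z i.succ * A i.succ 0 + z 0 ^ 2 * A 0 0 := by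
  simp only [dotProduct, mulVec, Fin.sum_univ_succ, hA.apply _ 0, mul_add, Finset.sum_add_distrib,
    Finset.mul_sum, two_mul, add_mul]
  simp only [mul_comm, mul_left_comm]
  ring

open Matrix in
-- The merged form is a pullback of the one before merging, up to a square with a nonpositive
-- coefficient.
theorem IsMConvex.isLorentzianForm_homogCount (hB : IsMConvex B) (hd : ∀ u ∈ B, ∑ i, u i = d)
    {α : Fin (m + 1) → ℕ} (hα : ∑ i, α i + 2 = d) :
    IsLorentzianForm (.of fun i j => (homogCount T B d (α + 𝐞[i] + 𝐞[j]) : ℝ)) := by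
  set s := α 0
  set k := Fin.tail α
  have hs : ∑ i, k i + s + 2 = d := by rw [← hα, Fin.sum_univ_succ, add_comm (∑ i, k i)]; rfl
  have hcount : ∀ i j, homogCount T B d (α + 𝐞[i] + 𝐞[j]) =
      subsetCount T B (Fin.tail (α + 𝐞[i] + 𝐞[j])) := fun i j =>
    if_pos (by rw [sum_add_single, sum_add_single, ← hα])
  have hW := (hB.splitSet T).isLorentzianForm_wordHessian (w := Sum.elim 0 1)
    (by rintro (_ | _) <;> simp) (n := s) (v := Sum.elim k 0) fun u hu => by
      rw [sum_eq_of_mem_splitSet hd hu, ← hs]; simp [Fintype.sum_sum_type]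
  let P : Matrix (Fin m ⊕ Fin m) (Fin (m + 1)) ℝ :=
    .of (Sum.elim (fun i => Pi.single i.succ 1) fun _ => Pi.single 0 (s + 1 : ℝ)⁻¹)
  have hP : ∀ z, P *ᵥ z = Sum.elim (fun i => z i.succ) fun _ => (s + 1 : ℝ)⁻¹ * z 0 := by
    intro z
    ext (i | i) <;> simp [P, mulVec]
  refine hW.of_le P (c := (s.factorial : ℝ)⁻¹) (by positivity) fun z => ?_
  have hratio : (1 : ℝ) ≤ (s + 2) * (s + 1) * ((s + 1 : ℝ)⁻¹) ^ 2 := by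
    rw [inv_pow, ← div_eq_mul_inv, one_le_div (by positivity)]
    nlinarith
  rw [hP, dotProduct_wordHessian_splitSet_mulVec_eq hd hs, inv_mul_cancel_left₀ (by positivity),
    dotProduct_mulVec_fin_succ (IsSymm.ext fun i j => by simp only [of_apply, add_right_comm])]
  simp only [of_apply, hcount, tail_add_single_zero, tail_add_single_succ]
  rw [mul_assoc 2 (s + 1 : ℝ), mul_inv_cancel_left₀ (by positivity), mul_pow _ (z 0),
    ← mul_assoc _ _ (z 0 ^ 2)]
  gcongr
  exact le_mul_of_one_le_left (sq_nonneg _) hratio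

end Merge

/-! ### A criterion for denormalized Lorentzian polynomials -/

section Denormalized

open Finsupp (equivFunOnFinite)

variable {n d : ℕ}

/-- The coefficient of `x ^ κ / κ!` in a polynomial; partial derivatives shift these. -/
noncomputable def expCoeff (f : MvPolynomial (Fin n) ℝ) (κ : Fin n → ℕ) : ℝ :=
  f.coeff (equivFunOnFinite.symm κ) * ∏ i, ((κ i).factorial : ℝ)

theorem coeff_normalizePoly (f : MvPolynomial (Fin n) ℝ) (e : Fin n →₀ ℕ) :
    (normalizePoly f).coeff e = f.coeff e / ∏ i, ((e i).factorial : ℝ) := by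
  classical
  simp only [normalizePoly, coeff_sum, coeff_monomial, Finset.sum_ite_eq', mem_support_iff]
  split_ifs with h
  · rfl
  · rw [not_ne_iff.mp h, zero_div]

theorem expCoeff_normalizePoly (f : MvPolynomial (Fin n) ℝ) (κ : Fin n → ℕ) :
    expCoeff (normalizePoly f) κ = f.coeff (equivFunOnFinite.symm κ) := by
  rw [expCoeff, coeff_normalizePoly]
  exact div_mul_cancel₀ _ (Finset.prod_ne_zero_iff.mpr fun i _ => by positivity)

theorem expCoeff_pderiv (f : MvPolynomial (Fin n) ℝ) (i : Fin n) (κ : Fin n → ℕ) :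
    expCoeff (pderiv i f) κ = expCoeff f (κ + 𝐞[i]) := by
  have hfac : ∏ t, (((κ + 𝐞[i]) t).factorial : ℝ) = (κ i + 1) * ∏ t, ((κ t).factorial : ℝ) := by
    rw [← Finset.mul_prod_erase _ _ (Finset.mem_univ i),
      ← Finset.mul_prod_erase _ (fun t => ((κ t).factorial : ℝ)) (Finset.mem_univ i), ← mul_assoc]
    congr 1
    · simp [Nat.factorial_succ]
    · exact Finset.prod_congr rfl fun t ht => by simp [Finset.ne_of_mem_erase ht]
  have hexp : equivFunOnFinite.symm (κ + 𝐞[i]) = equivFunOnFinite.symm κ + Finsupp.single i 1 := by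
    ext t
    simp [Finsupp.single_apply, Pi.single_apply, eq_comm]
  rw [expCoeff, expCoeff, hfac, coeff_pderiv, hexp]
  simp only [Finsupp.equivFunOnFinite_symm_apply_apply]
  ring

theorem expCoeff_foldl_pderiv (l : List (Fin n)) (f : MvPolynomial (Fin n) ℝ) (κ : Fin n → ℕ) :
    expCoeff (l.foldl (fun g i => pderiv i g) f) κ =
      expCoeff f ((l.map fun i => 𝐞[i]).sum + κ) := by
  induction l generalizing f with
  | nil => simp
  | cons i l ih =>
    rw [List.foldl_cons, ih, expCoeff_pderiv, List.map_cons, List.sum_cons]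
    congr 1
    abel

theorem hessian_eq_of_expCoeff (f : MvPolynomial (Fin n) ℝ) :
    hessian f = .of fun i j => expCoeff f (𝐞[i] + 𝐞[j]) := by
  ext i j
  have h0 : ∀ g : MvPolynomial (Fin n) ℝ, g.coeff 0 = expCoeff g 0 := fun g => by
    have hzero : equivFunOnFinite.symm (0 : Fin n → ℕ) = 0 := by ext; rfl
    simp [expCoeff, hzero]
  rw [hessian, h0, expCoeff_pderiv, expCoeff_pderiv, zero_add, Matrix.of_apply]

theorem sum_sum_map_single (l : List (Fin n)) :
    ∑ t, (l.map fun i => 𝐞[i]).sum t = l.length := by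
  induction l with
  | nil => simp
  | cons i l ih => rw [List.map_cons, List.sum_cons, add_comm, sum_add_single, ih, List.length_cons]

theorem isDenormalizedLorentzian_of_isLorentzianForm {f : MvPolynomial (Fin n) ℝ}
    (hf : f.IsHomogeneous d) (hnonneg : ∀ e, 0 ≤ f.coeff e)
    (hM : IsMConvex {κ : Fin n → ℕ | 0 < f.coeff (equivFunOnFinite.symm κ)})
    (hne : {κ : Fin n → ℕ | 0 < f.coeff (equivFunOnFinite.symm κ)}.Nonempty)
    (hL : ∀ α : Fin n → ℕ, ∑ i, α i + 2 = d →
      IsLorentzianForm (.of fun i j => f.coeff (equivFunOnFinite.symm (α + 𝐞[i] + 𝐞[j])))) :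
    IsDenormalizedLorentzian d f := by
  have hpos : ∀ e : Fin n →₀ ℕ, 0 < ∏ i, ((e i).factorial : ℝ) := fun e =>
    Finset.prod_pos fun i _ => by positivity
  have hdeg : ∀ κ : Fin n → ℕ, f.coeff (equivFunOnFinite.symm κ) ≠ 0 → ∑ i, κ i = d := fun κ h => by
    simpa [Finsupp.weight_apply, Finsupp.sum_fintype] using hf h
  refine ⟨fun e he => hf ?_, fun e => ?_, ⟨latticeRank _, hM.isPolymatroid_latticeRank hne
    fun κ hκ => hdeg κ hκ.ne', fun κ => ?_⟩, fun v => ?_⟩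
  · rw [coeff_normalizePoly] at he
    exact (div_ne_zero_iff.mp he).1
  · rw [coeff_normalizePoly]
    exact div_nonneg (hnonneg e) (hpos e).le
  · rw [natCast_mem_basePolytope, hM.baseLattice_latticeRank hne fun κ hκ => hdeg κ hκ.ne',
      coeff_normalizePoly, div_pos_iff_of_pos_right (hpos _), Set.mem_ofPred_eq]
  · refine IsLorentzianForm.atMostOnePosEigenvalue ?_
    simp only [hessian_eq_of_expCoeff, expCoeff_foldl_pderiv, expCoeff_normalizePoly, ← add_assoc]
    have hα := sum_sum_map_single (List.ofFn v)
    rw [List.length_ofFn] at hα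
    by_cases hd : 2 ≤ d
    · exact hL _ (by omega)
    · have hzero : ∀ α i j, f.coeff (equivFunOnFinite.symm (α + 𝐞[i] + 𝐞[j])) = 0 := by
        intro α i j
        by_contra h
        have := hdeg _ h
        rw [sum_add_single, sum_add_single] at this
        omega
      simp only [hzero]
      exact ⟨0, fun z _ => by simp [dotProduct, Matrix.mulVec]⟩

end Denormalized

/-! ### The transformed Snapper coefficients -/

section Binomials

theorem prod_range_natCast_sub_natCast {R : Type*} [CommRing R] (p k : ℕ) :
    ∏ j ∈ Finset.range k, ((j : R) - p) = (-1) ^ k * (k.factorial * p.choose k) := by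
  rw [← Nat.cast_mul, ← Nat.descFactorial_eq_factorial_mul_choose,
    ← descPochhammer_eval_eq_descFactorial, descPochhammer_eval_eq_prod_range]
  simp only [← neg_sub (p : R), Finset.prod_neg, Finset.card_range]

variable {σ K : Type*} [Field K] [CharZero K]

theorem eval_binomUpper {x : σ → K} {q : MvPolynomial σ K} {p : ℕ} (hq : eval x q = -1 - p)
    (k : ℕ) : eval x (binomUpper q k) = (-1) ^ k * p.choose k := by
  have hfactor : ∀ j : ℕ, eval x (q + C ((j : K) + 1)) = (j : K) - p := fun j => by
    rw [map_add, hq, eval_C]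
    ring
  rw [binomUpper, MvPolynomial.smul_eval, map_prod]
  simp only [hfactor, prod_range_natCast_sub_natCast]
  have hk : (k.factorial : K) ≠ 0 := Nat.cast_ne_zero.mpr k.factorial_ne_zero
  field_simp

theorem eval_binomLower {x : σ → K} {q : MvPolynomial σ K} {p : ℕ} (hq : eval x q = -1 - p)
    (k : ℕ) : eval x (binomLower q k) = (-1) ^ k * (p + 1).choose k := by
  have hfactor : ∀ j : ℕ, eval x (q + C (j : K)) = (j : K) - (p + 1 : ℕ) := fun j => by
    rw [map_add, hq, eval_C, Nat.cast_succ]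
    ring
  rw [binomLower, MvPolynomial.smul_eval, map_prod]
  simp only [hfactor, prod_range_natCast_sub_natCast]
  have hk : (k.factorial : K) ≠ 0 := Nat.cast_ne_zero.mpr k.factorial_ne_zero
  field_simp

end Binomials

section Snapper

variable {ι : Type*}

theorem zero_mem_indepLattice (rk : Finset ι → ℕ) : 0 ∈ indepLattice rk := fun I => by
  simp

theorem update_mem_indepLattice [DecidableEq ι] {rk : Finset ι → ℕ} {e : ι} {u : ι → ℕ}
    (hu : u ∈ indepLattice rk) {j : ℕ} (hj : j ≤ u e) :
    Function.update u e j ∈ indepLattice rk := fun I =>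
  (Finset.sum_le_sum fun i _ => by grind [Function.update_apply]).trans (hu I)

variable [Fintype ι]

theorem finite_setOf_sum_le (r : ℕ) : {κ : ι → ℕ | ∑ i, κ i ≤ r}.Finite := by
  classical exact (Set.finite_Iic fun _ => r).subset fun κ hκ i =>
    (Finset.single_le_sum (fun _ _ => Nat.zero_le _) (Finset.mem_univ i)).trans hκ

/-- Evaluating at `p = κ`, for increasing `κ`, shows that a system of products of binomial
coefficients is unitriangular. -/
theorem eq_zero_of_sum_mul_prod_choose_eq_zero {R : Type*} [CommRing R] {s : Finset (ι → ℕ)}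
    {c : (ι → ℕ) → R} (h : ∀ p : ι → ℕ, ∑ κ ∈ s, c κ * ∏ i, ((p i).choose (κ i) : R) = 0) :
    ∀ κ ∈ s, c κ = 0 := by
  intro κ
  induction κ using WellFoundedLT.induction with
  | _ κ ih =>
  intro hκ
  suffices ∀ μ ∈ s, μ ≠ κ → c μ * ∏ i, ((κ i).choose (μ i) : R) = 0 by
    simpa [Finset.sum_eq_single_of_mem κ hκ this] using h κ
  intro μ hμ hne
  by_cases hle : μ ≤ κ
  · rw [ih μ (lt_of_le_of_ne hle hne) hμ, zero_mul]
  · obtain ⟨i, hi⟩ := not_forall.mp hle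
    rw [Finset.prod_eq_zero (Finset.mem_univ i) (by rw [Nat.choose_eq_zero_of_lt (not_le.mp hi),
      Nat.cast_zero]), mul_zero]

theorem sum_prod_choose_eq_of_snapper {r : ℕ} {a : (ι → ℕ) → ℤ} {A D : Finset (ι → ℕ)}
    (hD : ∀ κ ∈ D, ∑ i, κ i ≤ r)
    (ha : ∑ κ ∈ A, ∏ i, binomLower (X i : MvPolynomial ι ℚ) (κ i) =
      ∑ κ ∈ D, C ((-1 : ℚ) ^ (r - ∑ i, κ i) * (a κ : ℚ)) * ∏ i, binomUpper (X i) (κ i))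
    (p : ι → ℕ) : ∑ u ∈ A, ∏ i, ((-1 : ℤ) ^ u i * (p i + 1).choose (u i)) =
      (-1) ^ r * ∑ κ ∈ D, a κ * ∏ i, ((p i).choose (κ i) : ℤ) := by
  have hx : ∀ i, eval (fun i => -1 - (p i : ℚ)) (X i) = -1 - p i := fun i => eval_X i
  have heval : ∑ u ∈ A, ∏ i, ((-1 : ℤ) ^ u i * (p i + 1).choose (u i)) =
      ∑ κ ∈ D, (-1) ^ (r - ∑ i, κ i) * a κ * ∏ i, ((-1) ^ κ i * ((p i).choose (κ i) : ℤ)) := by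
    have := congr_arg (eval fun i => -1 - (p i : ℚ)) ha
    simp only [map_sum, map_mul, map_prod, eval_binomUpper (hx _), eval_binomLower (hx _),
      eval_C] at this
    exact_mod_cast this
  rw [heval, Finset.mul_sum]
  refine Finset.sum_congr rfl fun κ hκ => ?_
  rw [Finset.prod_mul_distrib, Finset.prod_pow_eq_pow_sum, ← Nat.sub_add_cancel (hD κ hκ), pow_add,
    Nat.sub_add_cancel (hD κ hκ)]
  ring

variable [DecidableEq ι]

open Classical in
theorem prod_choose_add_charVec (T : Finset ι) (p b : ι → ℕ) :
    ∏ i, (p i + charVec T i).choose (b i) =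
      ∑ S ∈ T.powerset with charVec S ≤ b, ∏ i, (p i).choose (b i - charVec S i) := by
  have hpascal : ∀ i, (p i + charVec T i).choose (b i) =
      (if charVec T i = 1 ∧ 1 ≤ b i then (p i).choose (b i - 1) else 0) + (p i).choose (b i) := by
    intro i
    by_cases hi : i ∈ T <;> cases hb : b i <;> simp [charVec, hi, Nat.choose_succ_succ]
  simp only [hpascal]
  rw [Finset.prod_add]
  symm
  refine Finset.sum_subset_zero_on_sdiff (fun S _ => by simp) (fun S hS => ?_) fun S hS => ?_
  · obtain ⟨i, hiS, hi⟩ : ∃ i ∈ S, ¬ (charVec T i = 1 ∧ 1 ≤ b i) := by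
      by_contra! h
      refine (Finset.mem_sdiff.mp hS).2 (Finset.mem_filter.mpr ⟨?_, fun i => ?_⟩)
      · exact Finset.mem_powerset.mpr fun i hi => by simpa [charVec] using (h i hi).1
      · by_cases hi : i ∈ S <;> simp [charVec, hi, (h i · |>.2)]
    rw [Finset.prod_eq_zero hiS (if_neg hi), zero_mul]
  · obtain ⟨hST, hSb⟩ := Finset.mem_filter.mp hS
    rw [← Finset.prod_sdiff (Finset.subset_univ S), mul_comm]
    congr 1
    · refine Finset.prod_congr rfl fun i hi => ?_
      have hb := hSb i
      simp only [charVec, if_pos hi, if_pos (Finset.mem_powerset.mp hST hi)] at hb ⊢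
      rw [if_pos ⟨trivial, hb⟩]
    · refine Finset.prod_congr rfl fun i hi => ?_
      rw [charVec, if_neg (Finset.mem_sdiff.mp hi).2, tsub_zero]

theorem sum_prod_choose_add_charVec {T : Finset ι} {B D : Finset (ι → ℕ)}
    (hD : ∀ b ∈ B, ∀ κ ≤ b, κ ∈ D) (p : ι → ℕ) :
    ∑ b ∈ B, ∏ i, (p i + charVec T i).choose (b i) =
      ∑ κ ∈ D, subsetCount T B κ * ∏ i, (p i).choose (κ i) := by
  classical
  simp only [prod_choose_add_charVec, subsetCount, Finset.card_filter, Finset.sum_mul, ite_mul,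
    one_mul, zero_mul, Finset.sum_filter]
  rw [Finset.sum_comm, Finset.sum_comm (s := D)]
  refine Finset.sum_congr rfl fun S _ => ?_
  rw [← Finset.sum_filter, ← Finset.sum_filter]
  refine Finset.sum_bij' (fun b _ => b - charVec S) (fun κ _ => κ + charVec S) ?_ ?_ ?_ ?_ ?_
  · intro b hb
    obtain ⟨hb, hS⟩ := Finset.mem_filter.mp hb
    exact Finset.mem_filter.mpr ⟨hD b hb _ tsub_le_self, by rwa [tsub_add_cancel_of_le hS]⟩
  · exact fun κ hκ => Finset.mem_filter.mpr
      ⟨(Finset.mem_filter.mp hκ).2, le_add_of_nonneg_left zero_le⟩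
  · exact fun b hb => tsub_add_cancel_of_le (Finset.mem_filter.mp hb).2
  · exact fun κ _ => add_tsub_cancel_right κ _
  · exact fun b _ => rfl

variable {rk : Finset ι → ℕ} {e : ι}

theorem IsPolymatroid.add_single_mem_baseLattice (hrk : IsPolymatroid rk)
    (he : rk {e} = rk univ) {u : ι → ℕ} (hu : u ∈ indepLattice rk) :
    u + Pi.single e (rk univ - ∑ i, u i) ∈ baseLattice rk := by
  have hu' := hu univ
  have hsum : ∀ I : Finset ι, ∑ i ∈ I, (u + Pi.single e (rk univ - ∑ i, u i) : ι → ℕ) i =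
      ∑ i ∈ I, u i + if e ∈ I then rk univ - ∑ i, u i else 0 := fun I => by
    simp [Finset.sum_add_distrib, Finset.sum_pi_single']
  refine ⟨by rw [hsum, if_pos (Finset.mem_univ e)]; omega, fun I => ?_⟩
  rw [hsum]
  split_ifs with hI
  · have hrkI := hrk.2.1 {e} I (Finset.singleton_subset_iff.mpr hI)
    have huI := Finset.sum_le_sum_of_subset (f := u) (Finset.subset_univ I)
    omega
  · exact hu I

/-- The independent vectors are obtained from the bases by lowering the coordinate `e`. -/
theorem IsPolymatroid.sum_indepLattice (hrk : IsPolymatroid rk) (he : rk {e} = rk univ)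
    {A B : Finset (ι → ℕ)} (hA : A = indepLattice rk) (hB : B = baseLattice rk)
    {M : Type*} [AddCommMonoid M] (g : (ι → ℕ) → M) :
    ∑ u ∈ A, g u = ∑ b ∈ B, ∑ j ∈ Finset.range (b e + 1), g (Function.update b e j) := by
  simp only [Set.ext_iff, Finset.mem_coe] at hA hB
  rw [Finset.sum_sigma']
  symm
  refine Finset.sum_bij' (fun x _ => Function.update x.1 e x.2)
    (fun u _ => ⟨u + Pi.single e (rk univ - ∑ i, u i), u e⟩) ?_ ?_ ?_ ?_ fun _ _ => rfl
  · rintro ⟨b, j⟩ h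
    simp only [Finset.mem_sigma, hB, Finset.mem_range] at h
    exact (hA _).mpr (update_mem_indepLattice h.1.2 (Nat.lt_succ_iff.mp h.2))
  · intro u hu
    simp only [Finset.mem_sigma, hB, Finset.mem_range, Pi.add_apply, Pi.single_eq_same]
    exact ⟨hrk.add_single_mem_baseLattice he ((hA u).mp hu), by omega⟩
  · rintro ⟨b, j⟩ h
    simp only [Finset.mem_sigma, hB, Finset.mem_range] at h
    have hb := h.1.1
    rw [← Finset.add_sum_erase _ _ (Finset.mem_univ e)] at hb
    have hgap : rk univ - ∑ i, Function.update b e j i = b e - j := by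
      rw [Finset.sum_update_of_mem (Finset.mem_univ e), Finset.sdiff_singleton_eq_erase]
      omega
    simp only [hgap, Function.update_self, Sigma.mk.injEq, heq_eq_eq, and_true]
    ext i
    grind [Pi.add_apply, Function.update_apply]
  · intro u _
    ext i
    grind [Pi.add_apply, Function.update_apply]

theorem IsPolymatroid.sum_indepLattice_prod_choose (hrk : IsPolymatroid rk)
    (he : rk {e} = rk univ) {A B : Finset (ι → ℕ)} (hA : A = indepLattice rk)
    (hB : B = baseLattice rk) (p : ι → ℕ) :
    ∑ u ∈ A, ∏ i, ((-1 : ℤ) ^ u i * (p i + 1).choose (u i)) =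
      (-1) ^ rk univ * ∑ b ∈ B, ∏ i, (p i + charVec (univ.erase e) i).choose (b i) := by
  rw [hrk.sum_indepLattice he hA hB, Nat.cast_sum, Finset.mul_sum]
  refine Finset.sum_congr rfl fun b hb => ?_
  have hsum : ∑ i, b i = rk univ := (hB ▸ Finset.mem_coe.mpr hb : b ∈ baseLattice rk).1
  have hrest : ∀ j, ∏ i ∈ univ.erase e, ((-1 : ℤ) ^ Function.update b e j i *
      (p i + 1).choose (Function.update b e j i)) =
      ∏ i ∈ univ.erase e, ((-1) ^ b i * ((p i + charVec (univ.erase e) i).choose (b i) : ℤ)) :=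
    fun j => Finset.prod_congr rfl fun i hi => by
      rw [Function.update_of_ne (Finset.ne_of_mem_erase hi), charVec, if_pos hi]
  calc ∑ j ∈ Finset.range (b e + 1), ∏ i, ((-1 : ℤ) ^ Function.update b e j i *
        (p i + 1).choose (Function.update b e j i))
      = (∑ j ∈ Finset.range (b e + 1), (-1) ^ j * ((p e + 1).choose j : ℤ)) *
          ∏ i ∈ univ.erase e,
            ((-1) ^ b i * ((p i + charVec (univ.erase e) i).choose (b i) : ℤ)) := by
        simp only [← Finset.mul_prod_erase _ _ (Finset.mem_univ e), hrest, Function.update_self,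
          Finset.sum_mul]
    _ = ∏ i, ((-1) ^ b i * ((p i + charVec (univ.erase e) i).choose (b i) : ℤ)) := by
        rw [Int.alternating_sum_range_choose_eq_choose,
          ← Finset.mul_prod_erase _ _ (Finset.mem_univ e)]
        simp [charVec]
    _ = _ := by rw [Finset.prod_mul_distrib, Finset.prod_pow_eq_pow_sum, hsum, Nat.cast_prod]

theorem IsPolymatroid.eq_subsetCount_of_snapper (hrk : IsPolymatroid rk) (he : rk {e} = rk univ)
    {a : (ι → ℕ) → ℤ}
    (ha : (∑ᶠ (κ : ι → ℕ) (_ : (fun i => (κ i : ℝ)) ∈ indepPolytope rk),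
            ∏ i, binomLower (X i : MvPolynomial ι ℚ) (κ i)) =
          ∑ᶠ (κ : ι → ℕ) (_ : ∑ i, κ i ≤ rk univ),
            C ((-1 : ℚ) ^ (rk univ - ∑ i, κ i) * (a κ : ℚ)) * ∏ i, binomUpper (X i) (κ i))
    {κ : ι → ℕ} (hκ : ∑ i, κ i ≤ rk univ) :
    a κ = subsetCount (univ.erase e) (baseLattice rk) κ := by
  obtain ⟨D, hD⟩ := (finite_setOf_sum_le (ι := ι) (rk univ)).exists_finset_coe
  obtain ⟨A, hA⟩ := ((finite_setOf_sum_le (rk univ)).subset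
    fun (u : ι → ℕ) (hu : u ∈ indepLattice rk) => hu univ).exists_finset_coe
  obtain ⟨B, hB⟩ := ((finite_setOf_sum_le (rk univ)).subset
    fun (u : ι → ℕ) (hu : u ∈ baseLattice rk) => hu.1.le).exists_finset_coe
  have hmem : ∀ κ, κ ∈ D ↔ ∑ i, κ i ≤ rk univ := fun κ => Set.ext_iff.mp hD κ
  have hmemA : ∀ κ, κ ∈ A ↔ κ ∈ indepLattice rk := fun κ => Set.ext_iff.mp hA κ
  have hBD : ∀ b ∈ B, ∀ κ ≤ b, κ ∈ D := fun b hb κ hκb => (hmem κ).mpr <|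
    (Finset.sum_le_sum fun i _ => hκb i).trans ((Set.ext_iff.mp hB b).mp hb).1.le
  simp only [natCast_mem_indepPolytope, ← hmem, ← hmemA, finsum_mem_finset_eq_sum] at ha
  have hD0 : ∀ κ ∈ D, a κ - subsetCount (univ.erase e) B κ = 0 := by
    refine eq_zero_of_sum_mul_prod_choose_eq_zero fun p => ?_
    have hsum := sum_prod_choose_eq_of_snapper (fun κ => (hmem κ).mp) ha p
    rw [hrk.sum_indepLattice_prod_choose he hA hB, sum_prod_choose_add_charVec hBD] at hsum
    have := mul_left_cancel₀ (pow_ne_zero _ (by decide)) hsum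
    push_cast at this
    simp only [sub_mul, Finset.sum_sub_distrib, this, sub_self]
  rw [← hB]
  exact sub_eq_zero.mp (hD0 κ ((hmem κ).mpr hκ))

end Snapper

section Homogenization

variable {m r : ℕ} {R : Type*} [CommSemiring R]

theorem coeff_finsum_monomial_cons (c : (Fin m → ℕ) → R) (α : Fin (m + 1) → ℕ) :
    (∑ᶠ (κ : Fin m → ℕ) (_ : ∑ i, κ i ≤ r),
      monomial (Finsupp.equivFunOnFinite.symm (Fin.cons (r - ∑ i, κ i) κ)) (c κ)).coeff
        (Finsupp.equivFunOnFinite.symm α) = if ∑ i, α i = r then c (Fin.tail α) else 0 := by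
  obtain ⟨D, hD⟩ := (finite_setOf_sum_le (ι := Fin m) r).exists_finset_coe
  have hmem : ∀ κ, ∑ i, κ i ≤ r ↔ κ ∈ D := fun κ => (Set.ext_iff.mp hD κ).symm
  obtain ⟨n, μ, rfl⟩ : ∃ n μ, Fin.cons n μ = α := ⟨_, _, Fin.cons_self_tail α⟩
  have hsum : ∑ i, (Fin.cons n μ : Fin (m + 1) → ℕ) i = n + ∑ i, μ i := by
    simp [Fin.sum_univ_succ]
  have hcons : ∀ κ ∈ D, (Fin.cons (r - ∑ i, κ i) κ : Fin (m + 1) → ℕ) = Fin.cons n μ ↔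
      κ = μ ∧ n + ∑ i, μ i = r := by
    intro κ hκ
    have hκr := (hmem κ).mpr hκ
    rw [Fin.cons_inj, and_comm]
    exact and_congr_right (by rintro rfl; omega)
  simp only [hmem, finsum_mem_finset_eq_sum, coeff_sum, coeff_monomial,
    EmbeddingLike.apply_eq_iff_eq]
  rw [Finset.sum_congr rfl fun κ hκ => if_congr (hcons κ hκ) rfl rfl]
  rw [hsum, Fin.tail_cons]
  split_ifs with h
  · have hμ : μ ∈ D := (hmem μ).mp (h ▸ le_add_self)
    simp [h, hμ]
  · simp [h]

theorem isDenormalizedLorentzian_of_coeff_eq_homogCount {d : ℕ} {T : Finset (Fin m)}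
    {B : Set (Fin m → ℕ)} (hB : IsMConvex B) (hne : B.Nonempty) (hd : ∀ u ∈ B, ∑ i, u i = d)
    {f : MvPolynomial (Fin (m + 1)) ℝ}
    (hf : ∀ α, f.coeff (Finsupp.equivFunOnFinite.symm α) = homogCount T B d α) :
    IsDenormalizedLorentzian d f := by
  have hf' : ∀ v, f.coeff v = homogCount T B d v := fun v => by
    rw [← hf, Finsupp.equivFunOnFinite_symm_coe]
  refine isDenormalizedLorentzian_of_isLorentzianForm (fun v hv => ?_)
    (fun v => hf' v ▸ Nat.cast_nonneg _) ?_ ?_ fun α hα => ?_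
  · rw [hf', Nat.cast_ne_zero, homogCount, ite_ne_right_iff] at hv
    simpa [Finsupp.weight_apply, Finsupp.sum_fintype] using hv.1
  · simpa only [hf, Nat.cast_pos] using hB.setOf_homogCount_pos hd
  · simpa only [hf, Nat.cast_pos] using homogCount_pos_nonempty hd hne
  · simpa only [hf] using hB.isLorentzianForm_homogCount hd hα

end Homogenization

/-- For a polymatroid `P` of rank `r` on `[m]` with `rk_P({i}) = r` for some `i`, the
homogenization `H̃(t, t₀) = Σ_κ a_κ t^κ t₀^{r-|κ|}` of the transformed Snapper polynomial,
where `Σ_{κ ∈ I(P)∩ℤ^m} t^{(κ)} = Σ_κ (-1)^{r-|κ|} a_κ t^{[κ]}`, is denormalized Lorentzian;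
in particular the `a_κ` are nonnegative. -/
theorem lorentzian_of_transformed_snapper_of_polymatroid
    {m r : ℕ} (rk : Finset (Fin m) → ℕ) (hP : IsPolymatroid rk)
    (hrank : rk Finset.univ = r) (hfull : ∃ i : Fin m, rk {i} = r)
    (a : (Fin m → ℕ) → ℤ)
    (ha : (∑ᶠ (κ : Fin m → ℕ) (_ : (fun i => (κ i : ℝ)) ∈ indepPolytope rk),
            ∏ i, binomLower (MvPolynomial.X i) (κ i)) =
          ∑ᶠ (κ : Fin m → ℕ) (_ : ∑ i, κ i ≤ r),
            MvPolynomial.C ((-1 : ℚ) ^ (r - ∑ i, κ i) * (a κ : ℚ)) *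
              ∏ i, binomUpper (MvPolynomial.X i) (κ i)) :
    IsDenormalizedLorentzian r
      (∑ᶠ (κ : Fin m → ℕ) (_ : ∑ i, κ i ≤ r),
        MvPolynomial.monomial
          (Finsupp.equivFunOnFinite.symm (Fin.cons (r - ∑ i, κ i) κ)) ((a κ : ℝ))) ∧
    ∀ κ : Fin m → ℕ, ∑ i, κ i ≤ r → 0 ≤ a κ := by
  obtain ⟨e, he⟩ := hfull
  subst hrank
  have haCount {κ : Fin m → ℕ} (hκ : ∑ i, κ i ≤ rk univ) :
      a κ = subsetCount (univ.erase e) (baseLattice rk) κ := hP.eq_subsetCount_of_snapper he ha hκ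
  refine ⟨?_, fun κ hκ => haCount hκ ▸ Int.natCast_nonneg _⟩
  have hne : (baseLattice rk).Nonempty :=
    ⟨_, hP.add_single_mem_baseLattice he (zero_mem_indepLattice rk)⟩
  refine isDenormalizedLorentzian_of_coeff_eq_homogCount (T := univ.erase e)
    hP.isMConvex_baseLattice hne (fun u hu => hu.1) fun α => ?_
  rw [coeff_finsum_monomial_cons, homogCount]
  split_ifs with h
  · have htail : ∑ i, Fin.tail α i ≤ rk univ := h ▸ Fin.sum_univ_succ α ▸ le_add_self
    rw [haCount htail, Int.cast_natCast]
  · rw [Nat.cast_zero]
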